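/- Let G be a cubic graph. Then there exists a map f: E(G) → E(S) such that |V(f)| ≥ (4/5)·|V(G)|, and moreover for every vertex v ∈ V(G) \ V(f) there exist two distinct edges e, e' ∈ ∂_G(v) with f(e) = f(e'). -/

import Mathlib

open scoped Classical

/-- A finite undirected multigraph (possibly with loops and parallel edges),
given by a vertex type, an edge type, and an endpoints map. -/
structure Multigraph where
  V : Type
  E : Type
  [fintV : Fintype V]
  [fintE : Fintype E]
  [decV : DecidableEq V]
  [decE : DecidableEq E]
  ends : E → Sym2 V

namespace Multigraph

attribute [instance] Multigraph.fintV Multigraph.fintE Multigraph.decV Multigraph.decE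

variable (G : Multigraph)

/-- The number of times `v` occurs as an endpoint of `e` (2 for a loop at `v`). -/
def incCount (v : G.V) (e : G.E) : ℕ :=
  if G.ends e = Sym2.diag v then 2 else if v ∈ G.ends e then 1 else 0

/-- Degree of a vertex (a loop contributes 2). -/
def degree (v : G.V) : ℕ := ∑ e : G.E, G.incCount v e

/-- The set `∂_G(v)` of edges incident to `v`. -/
def star (v : G.V) : Finset G.E := Finset.univ.filter fun e => v ∈ G.ends e

/-- No loops. -/
def Loopless : Prop := ∀ e : G.E, ¬ (G.ends e).IsDiag

/-- A cubic graph: loopless and 3-regular (parallel edges allowed). -/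
def Cubic : Prop := G.Loopless ∧ ∀ v : G.V, G.degree v = 3

/-- A cubic pseudo-graph: 3-regular, loops and parallel edges allowed. -/
def CubicPseudo : Prop := ∀ v : G.V, G.degree v = 3

/-- A simple graph: no loops and no parallel edges. -/
def Simple : Prop := G.Loopless ∧ ∀ e e' : G.E, G.ends e = G.ends e' → e = e'

/-- Two edges are adjacent if they are distinct and share an endpoint. -/
def EdgeAdj (e e' : G.E) : Prop :=
  e ≠ e' ∧ ∃ v : G.V, v ∈ G.ends e ∧ v ∈ G.ends e'

/-- A matching: a set of pairwise non-adjacent edges. -/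
def IsMatching (M : Set G.E) : Prop :=
  ∀ e ∈ M, ∀ e' ∈ M, e ≠ e' → ¬ ∃ v : G.V, v ∈ G.ends e ∧ v ∈ G.ends e'

/-- A perfect matching: a matching covering every vertex. -/
def IsPerfectMatching (M : Set G.E) : Prop :=
  G.IsMatching M ∧ ∀ v : G.V, ∃ e ∈ M, v ∈ G.ends e

/-- Degree of `v` within the spanning subgraph with edge set `A`. -/
noncomputable def degIn (A : Set G.E) (v : G.V) : ℕ :=
  ∑ e : G.E, if e ∈ A then G.incCount v e else 0

/-- `A` is the edge set of a `k`-factor: a spanning `k`-regular subgraph. -/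
def IsKFactor (k : ℕ) (A : Set G.E) : Prop := ∀ v : G.V, G.degIn A v = k

/-- `A` is the edge set of an even subgraph. -/
def EvenSubgraph (A : Set G.E) : Prop := ∀ v : G.V, Even (G.degIn A v)

/-- Reachability using only edges from `A`. -/
def Reach (A : Set G.E) : G.V → G.V → Prop :=
  Relation.ReflTransGen fun a b => ∃ e ∈ A, G.ends e = s(a, b)

/-- Connectedness. -/
def Connected : Prop := ∀ u v : G.V, G.Reach Set.univ u v

/-- A bridge: an edge whose removal disconnects its endpoints. -/
def IsBridge (e : G.E) : Prop :=
  ∀ u w : G.V, G.ends e = s(u, w) → ¬ G.Reach {e' | e' ≠ e} u w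

/-- The chromatic index: least number of colors of a proper edge coloring. -/
noncomputable def chromaticIndex : ℕ :=
  sInf {n | ∃ c : G.E → Fin n, ∀ e e', G.EdgeAdj e e' → c e ≠ c e'}

/-- A triangle on distinct vertices `u, v, w` with edges `e₁, e₂, e₃`. -/
def IsTriangle (e₁ e₂ e₃ : G.E) (u v w : G.V) : Prop :=
  u ≠ v ∧ v ≠ w ∧ u ≠ w ∧
    G.ends e₁ = s(u, v) ∧ G.ends e₂ = s(v, w) ∧ G.ends e₃ = s(u, w)

/-- Triangle-freeness. -/
def TriangleFree : Prop :=
  ¬ ∃ (e₁ e₂ e₃ : G.E) (u v w : G.V), G.IsTriangle e₁ e₂ e₃ u v w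

/-- An isomorphism of multigraphs. -/
structure Iso (G H : Multigraph) where
  vEquiv : G.V ≃ H.V
  eEquiv : G.E ≃ H.E
  ends_map : ∀ e : G.E, H.ends (eEquiv e) = (G.ends e).map vEquiv

/-- `G` and `H` are isomorphic. -/
def IsIsomorphicTo (G H : Multigraph) : Prop := Nonempty (Iso G H)

/-- An `H`-coloring of `G`: `f(∂_G(x)) = ∂_H(y)` for every vertex `x` of `G`,
some vertex `y` of `H`. -/
def IsHColoring (G H : Multigraph) (f : G.E → H.E) : Prop :=
  ∀ x : G.V, ∃ y : H.V, (G.star x).image f = H.star y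

/-- The set `V(f)` of vertices of `G` satisfying the `H`-coloring condition under `f`. -/
def colVerts (G H : Multigraph) (f : G.E → H.E) : Set G.V :=
  {x : G.V | ∃ y : H.V, (G.star x).image f = H.star y}

/-- The incidence multiset of a vertex: each incident edge with its multiplicity
(a loop occurs twice). -/
noncomputable def incMultiset (v : G.V) : Multiset G.E :=
  ∑ e : G.E, (G.incCount v e) • ({e} : Multiset G.E)

end Multigraph

/-- The Petersen graph. -/
def Petersen : Multigraph where
  V := Fin 10
  E := {p : Sym2 (Fin 10) //
    p ∈ ({s(0,1), s(1,2), s(2,3), s(3,4), s(4,0),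
          s(0,5), s(1,6), s(2,7), s(3,8), s(4,9),
          s(5,7), s(7,9), s(9,6), s(6,8), s(8,5)} : Finset (Sym2 (Fin 10)))}
  ends := Subtype.val

/-- The Sylvester graph `S` on 10 vertices: a central vertex 0 joined by three
bridges to three end-blocks; each end-block is a 3-vertex multigraph whose two
non-root vertices are joined by a pair of parallel edges. -/
def SylvesterS : Multigraph where
  V := Fin 10
  E := Fin 15
  ends := ![s(0,1), s(1,2), s(1,3), s(2,3), s(2,3),
            s(0,4), s(4,5), s(4,6), s(5,6), s(5,6),
            s(0,7), s(7,8), s(7,9), s(8,9), s(8,9)]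

/-- The Sylvester simple graph `S₁₆` on 16 vertices: central vertex 0 joined by
bridges to three 5-vertex end-blocks with edges
(v1,v2),(v1,v3),(v1,v4),(v2,v3),(v2,v4),(v3,v5),(v4,v5). -/
def Sylvester16 : Multigraph where
  V := Fin 16
  E := {p : Sym2 (Fin 16) //
    p ∈ ({s(1,2), s(1,3), s(1,4), s(2,3), s(2,4), s(3,5), s(4,5), s(0,5),
          s(6,7), s(6,8), s(6,9), s(7,8), s(7,9), s(8,10), s(9,10), s(0,10),
          s(11,12), s(11,13), s(11,14), s(12,13), s(12,14), s(13,15), s(14,15),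
          s(0,15)} : Finset (Sym2 (Fin 16)))}
  ends := Subtype.val

/-- The graph `S'` on 10 vertices: two 5-vertex blocks, each consisting of a
triangle v1v2v3 together with edges (v1,v4),(v2,v4),(v3,v5),(v4,v5), joined by
a bridge between the two degree-2 vertices. -/
def Sprime : Multigraph where
  V := Fin 10
  E := {p : Sym2 (Fin 10) //
    p ∈ ({s(0,1), s(0,2), s(1,2), s(0,3), s(1,3), s(2,4), s(3,4),
          s(5,6), s(5,7), s(6,7), s(5,8), s(6,8), s(7,9), s(8,9),
          s(4,9)} : Finset (Sym2 (Fin 10)))}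
  ends := Subtype.val

/-- The Sylvester pseudo-graph `S₄` on 4 vertices: a central vertex 0 joined to
vertices 1, 2, 3 (edges `a = 0`, `b = 1`, `c = 2`), each of which carries a loop
(`a' = 3`, `b' = 4`, `c' = 5`). -/
def S4 : Multigraph where
  V := Fin 4
  E := Fin 6
  ends := ![s(0,1), s(0,2), s(0,3), s(1,1), s(2,2), s(3,3)]

namespace Multigraph

variable {G : Multigraph}

/-- The edges with exactly one end in `X`. -/
def bd (X : Finset G.V) : Finset G.E :=
  Finset.univ.filter fun e => ∃ u ∈ X, ∃ v ∉ X, G.ends e = s(u, v)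

/-- The edges with both ends in `X`. -/
def inner (X : Finset G.V) : Finset G.E :=
  Finset.univ.filter fun e => ∀ v ∈ G.ends e, v ∈ X

theorem mem_star {v : G.V} {e : G.E} : e ∈ G.star v ↔ v ∈ G.ends e := by
  simp [star]

theorem mem_bd {X : Finset G.V} {e : G.E} :
    e ∈ bd X ↔ ∃ u ∈ X, ∃ v ∉ X, G.ends e = s(u, v) := by
  simp [bd]

theorem mem_inner {X : Finset G.V} {e : G.E} : e ∈ inner X ↔ ∀ v ∈ G.ends e, v ∈ X := by
  simp [inner]

theorem mem_bd_iff {X : Finset G.V} {e : G.E} {u v : G.V} (h : G.ends e = s(u, v)) :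
    e ∈ bd X ↔ (u ∈ X ∧ v ∉ X) ∨ (v ∈ X ∧ u ∉ X) := by
  rw [mem_bd]
  constructor
  · rintro ⟨x, hx, y, hy, h'⟩
    rw [h, Sym2.eq_iff] at h'
    rcases h' with ⟨rfl, rfl⟩ | ⟨rfl, rfl⟩ <;> tauto
  · rintro (⟨h1, h2⟩ | ⟨h1, h2⟩)
    · exact ⟨u, h1, v, h2, h⟩
    · exact ⟨v, h1, u, h2, by rw [h, Sym2.eq_swap]⟩

theorem mem_inner_iff {X : Finset G.V} {e : G.E} {u v : G.V} (h : G.ends e = s(u, v)) :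
    e ∈ inner X ↔ u ∈ X ∧ v ∈ X := by
  rw [mem_inner, h]; simp

theorem mem_star_iff {e : G.E} {u v w : G.V} (h : G.ends e = s(u, v)) :
    e ∈ G.star w ↔ w = u ∨ w = v := by
  rw [mem_star, h]; simp

theorem exists_ends (hl : G.Loopless) (e : G.E) : ∃ u v, u ≠ v ∧ G.ends e = s(u, v) := by
  have := hl e
  revert this
  induction G.ends e using Sym2.ind with
  | _ u v => intro h; exact ⟨u, v, by simpa using h, rfl⟩

theorem exists_ends_of_mem (hl : G.Loopless) {e : G.E} {u : G.V} (h : e ∈ G.star u) :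
    ∃ v, u ≠ v ∧ G.ends e = s(u, v) := by
  obtain ⟨x, y, hxy, he⟩ := exists_ends hl e
  rcases (mem_star_iff he).1 h with rfl | rfl
  · exact ⟨y, hxy, he⟩
  · exact ⟨x, hxy.symm, by rw [he, Sym2.eq_swap]⟩

theorem Cubic.card_star (hG : G.Cubic) (v : G.V) : (G.star v).card = 3 := by
  rw [← hG.2 v, degree, star, Finset.card_filter]
  refine Finset.sum_congr rfl fun e _ => ?_
  have : G.ends e ≠ Sym2.diag v := fun h => hG.1 e (h ▸ Sym2.diag_isDiag v)
  simp [incCount, this]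

theorem cubic_of_card_star (hl : G.Loopless) (h : ∀ v, (G.star v).card = 3) : G.Cubic := by
  refine ⟨hl, fun v => ?_⟩
  rw [← h v, degree, star, Finset.card_filter]
  refine Finset.sum_congr rfl fun e _ => ?_
  have : G.ends e ≠ Sym2.diag v := fun h => hl e (h ▸ Sym2.diag_isDiag v)
  simp [incCount, this]

/-- An edge at a vertex of `X` is either inner or a boundary edge. -/
theorem star_subset {X : Finset G.V} (hl : G.Loopless) {v : G.V} (hv : v ∈ X) {e : G.E}
    (he : e ∈ G.star v) : e ∈ inner X ∨ e ∈ bd X := by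
  obtain ⟨w, -, h⟩ := exists_ends_of_mem hl he
  rw [mem_inner_iff h, mem_bd_iff h]; tauto

theorem notMem_bd_of_mem_inner {X : Finset G.V} {e : G.E} (h : e ∈ inner X) : e ∉ bd X := by
  rw [mem_bd]; rintro ⟨u, hu, v, hv, h'⟩
  exact hv ((mem_inner_iff h').1 h).2

/-- Summing over the darts at a set of vertices. -/
theorem sum_star {M : Type*} [AddCommMonoid M] (hl : G.Loopless) (X : Finset G.V) (L : Finset G.E)
    (c : G.E → M) :
    ∑ v ∈ X, ∑ e ∈ L ∩ G.star v, c e = ∑ e ∈ L ∩ bd X, c e + 2 • ∑ e ∈ L ∩ inner X, c e := by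
  have h1 : ∀ e, ∑ v ∈ X, (if e ∈ G.star v then c e else 0) =
      (if e ∈ bd X then c e else 0) + 2 • (if e ∈ inner X then c e else 0) := by
    intro e
    obtain ⟨u, v, huv, he⟩ := exists_ends hl e
    have h2 : ∀ w, (if e ∈ G.star w then c e else 0) =
        (if w = u then c e else 0) + (if w = v then c e else 0) := by
      intro w
      simp only [mem_star_iff he]
      by_cases h1 : w = u
      · subst h1; simp [huv]
      · simp [h1]
    simp_rw [h2, Finset.sum_add_distrib, Finset.sum_ite_eq', mem_bd_iff he, mem_inner_iff he]
    by_cases h1 : u ∈ X <;> by_cases h3 : v ∈ X <;> simp [h1, h3, two_nsmul]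
  simp_rw [← Finset.sum_ite_mem]
  rw [Finset.sum_comm, Finset.smul_sum, ← Finset.sum_add_distrib]
  exact Finset.sum_congr rfl fun e _ => h1 e

theorem sum_card_star (hl : G.Loopless) (X : Finset G.V) (L : Finset G.E) :
    ∑ v ∈ X, (L ∩ G.star v).card = (L ∩ bd X).card + 2 * (L ∩ inner X).card := by
  simp only [Finset.card_eq_sum_ones]
  rw [sum_star hl X L fun _ => 1, two_nsmul, two_mul]

theorem Cubic.three_mul_card (hG : G.Cubic) (X : Finset G.V) :
    3 * X.card = (bd X).card + 2 * (inner X).card := by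
  have := sum_card_star hG.1 X Finset.univ
  simp only [Finset.univ_inter, hG.card_star, Finset.sum_const, smul_eq_mul] at this
  omega

theorem Reach.symm {A : Set G.E} {u v : G.V} (h : G.Reach A u v) : G.Reach A v u := by
  induction h with
  | refl => exact .refl
  | tail _ h ih =>
    obtain ⟨e, he, h⟩ := h
    exact .head ⟨e, he, by rw [h, Sym2.eq_swap]⟩ ih

/-- The vertices reachable from `v` along edges of `A`. -/
noncomputable def comp (A : Set G.E) (v : G.V) : Finset G.V :=
  Finset.univ.filter fun w => G.Reach A v w

theorem mem_comp {A : Set G.E} {v w : G.V} : w ∈ comp A v ↔ G.Reach A v w := by simp [comp]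

theorem self_mem_comp {A : Set G.E} {v : G.V} : v ∈ comp A v := mem_comp.2 .refl

theorem comp_eq {A : Set G.E} {v w : G.V} (h : G.Reach A v w) : comp A v = comp A w := by
  ext x; rw [mem_comp, mem_comp]
  exact ⟨fun h' => h.symm.trans h', fun h' => h.trans h'⟩

theorem notMem_of_mem_bd_comp {A : Set G.E} {v : G.V} {e : G.E} (h : e ∈ bd (comp A v)) :
    e ∉ A := by
  obtain ⟨x, hx, y, hy, he⟩ := mem_bd.1 h
  exact fun hA => hy (mem_comp.2 ((mem_comp.1 hx).tail ⟨e, hA, he⟩))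

/-- A choice of representatives for the components of `A`, preferring vertices satisfying `Q`. -/
theorem exists_representatives (A : Set G.E) (Q : G.V → Prop) :
    ∃ ρ : G.V → G.V, (∀ v, G.Reach A v (ρ v)) ∧ (∀ v w, G.Reach A v w → ρ v = ρ w) ∧
      ∀ v w, G.Reach A v w → Q w → Q (ρ v) := by
  have : ∀ K : {K : Finset G.V // K.Nonempty}, ∃ r ∈ K.1, (∃ w ∈ K.1, Q w) → Q r := by
    intro K
    by_cases h : ∃ w ∈ K.1, Q w
    · obtain ⟨w, hw, hq⟩ := h
      exact ⟨w, hw, fun _ => hq⟩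
    · exact ⟨K.2.choose, K.2.choose_spec, fun h' => absurd h' h⟩
  choose pick hpick hQ using this
  refine ⟨fun v => pick ⟨comp A v, v, self_mem_comp⟩, fun v => mem_comp.1 (hpick _), ?_, ?_⟩
  · intro v w h
    simp only [comp_eq h]
  · intro v w h hq
    exact hQ _ ⟨w, mem_comp.2 h, hq⟩

theorem exists_chain_of_reach (hl : G.Loopless) {L : Finset G.E} {u v : G.V}
    (h : G.Reach L u v) : ∃ p : G.E → ZMod 2, ∀ x,
      ∑ e ∈ L ∩ G.star x, p e = (if u = x then 1 else 0) + (if v = x then 1 else 0) := by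
  induction h with
  | refl =>
    refine ⟨0, fun x => ?_⟩
    simp only [Pi.zero_apply, Finset.sum_const_zero]
    split_ifs <;> decide
  | @tail v w _ h ih =>
    obtain ⟨p, hp⟩ := ih
    obtain ⟨e, he, h⟩ := h
    have hvw : v ≠ w := fun h' => hl e (by rw [h, h']; simp)
    refine ⟨p + Pi.single e 1, fun x => ?_⟩
    have h0 : ∑ e' ∈ L ∩ G.star x, (Pi.single e 1 : G.E → ZMod 2) e' =
        if x = v ∨ x = w then 1 else 0 := by
      rw [Finset.sum_pi_single']
      simp only [Finset.mem_inter, mem_star_iff h, Finset.mem_coe.1 he, true_and]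
    simp only [Pi.add_apply, Finset.sum_add_distrib, hp, h0]
    have h2 : (1 : ZMod 2) + 1 = 0 := by decide
    by_cases h1 : v = x
    · subst h1; simp [hvw, hvw.symm, add_assoc, h2]
    · by_cases h3 : w = x
      · subst h3; simp [h1]
      · simp [h1, h3, Ne.symm h1, Ne.symm h3]

/-- Prescribed vertex sums modulo 2, except at one representative of each component. -/
theorem exists_chain (hl : G.Loopless) (L : Finset G.E) (ρ : G.V → G.V)
    (hρ : ∀ v, G.Reach L v (ρ v)) (s : G.V → ZMod 2) :
    ∃ c : G.E → ZMod 2, ∀ x, (∀ v, ρ v ≠ x) → ∑ e ∈ L ∩ G.star x, c e = s x := by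
  choose p hp using fun v => exists_chain_of_reach hl (hρ v)
  refine ⟨fun e => ∑ v, s v * p v e, fun x hx => ?_⟩
  rw [Finset.sum_comm]
  simp_rw [← Finset.mul_sum, hp]
  simp [hx]

/-- The failure of the prescribed sum at a representative is detected by the parity of the
component. -/
theorem exists_chain_parity (hl : G.Loopless) (L : Finset G.E) (ρ : G.V → G.V)
    (hρ : ∀ v, G.Reach L v (ρ v)) (hρ' : ∀ v w, G.Reach L v w → ρ v = ρ w) (s : G.V → ZMod 2) :
    ∃ c : G.E → ZMod 2, ∀ x, ∑ e ∈ L ∩ G.star x, c e = s x ∨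
      (ρ x = x ∧ ∑ w ∈ comp (L : Set G.E) x, s w = 1) := by
  obtain ⟨c, hc⟩ := exists_chain hl L ρ hρ s
  refine ⟨c, fun x => ?_⟩
  by_cases hx : ρ x = x
  · by_cases h : ∑ e ∈ L ∩ G.star x, c e = s x
    · exact .inl h
    refine .inr ⟨hx, ?_⟩
    have h1 := sum_star hl (comp (L : Set G.E) x) L c
    have h2 : L ∩ bd (comp (L : Set G.E) x) = ∅ := by
      ext e; simp only [Finset.mem_inter, Finset.notMem_empty, iff_false]
      exact fun h => notMem_of_mem_bd_comp h.2 h.1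
    rw [h2, Finset.sum_empty, zero_add, two_nsmul, CharTwo.add_self_eq_zero,
      ← Finset.add_sum_erase _ _ self_mem_comp] at h1
    rw [← Finset.add_sum_erase _ _ (self_mem_comp (A := (L : Set G.E)) (v := x))]
    have h3 : ∑ v ∈ (comp (L : Set G.E) x).erase x, ∑ e ∈ L ∩ G.star v, c e =
        ∑ v ∈ (comp (L : Set G.E) x).erase x, s v := by
      refine Finset.sum_congr rfl fun v hv => hc v fun w hw => ?_
      have h5 := mem_comp.1 (Finset.mem_of_mem_erase hv)
      have h6 := hρ' w v (hw ▸ hρ w)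
      exact Finset.ne_of_mem_erase hv (by rw [← hw, h6, ← hρ' x v h5, hx])
    rw [h3] at h1
    generalize ∑ v ∈ (comp (L : Set G.E) x).erase x, s v = b at *
    generalize ∑ e ∈ L ∩ G.star x, c e = a at *
    generalize s x = d at *
    clear h3
    revert a b d; decide
  · refine .inl (hc x fun v hv => hx ?_)
    rw [← hv]; exact (hρ' v (ρ v) (hρ v)).symm

/-- The simple graph of edges outside `R`. -/
def simpleAvoiding (G : Multigraph) (R : Finset G.E) : SimpleGraph G.V where
  Adj x y := x ≠ y ∧ ∃ e ∉ R, G.ends e = s(x, y)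
  symm := ⟨fun x y h => ⟨h.1.symm, by obtain ⟨_, e, he, h⟩ := h; exact ⟨e, he, by rw [h, Sym2.eq_swap]⟩⟩⟩
  loopless := ⟨fun x h => h.1 rfl⟩

theorem even_card (hG : G.Cubic) : Even (Fintype.card G.V) := by
  have h := hG.three_mul_card Finset.univ
  have h1 : bd (Finset.univ : Finset G.V) = ∅ := by ext e; simp [mem_bd]
  rw [h1, Finset.card_empty, Finset.card_univ] at h
  exact ⟨(inner (Finset.univ : Finset G.V)).card - Fintype.card G.V, by omega⟩

/-- A bound for the boundary sizes of disjoint vertex sets separated by `A`, up to the edges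
in `R`. -/
theorem sum_card_bd_le {ι : Type*} (hG : G.Cubic) (R : Finset G.E) (A : Finset G.V) (I : Finset ι)
    (K : ι → Finset G.V) (hA : ∀ i, Disjoint (K i) A)
    (hK : ∀ i j x, x ∈ K i → x ∈ K j → i = j)
    (hsep : ∀ i x y, x ∈ K i → y ∉ A → (G.simpleAvoiding R).Adj x y → y ∈ K i) :
    ∑ i ∈ I, (bd (K i)).card ≤ 3 * A.card + 2 * R.card := by
  have h1 : ∀ x, (I.filter fun i => x ∈ K i).card ≤ 1 := by
    intro x
    rw [Finset.card_le_one]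
    intro i hi j hj
    exact hK i j x (Finset.mem_filter.1 hi).2 (Finset.mem_filter.1 hj).2
  have h2 : ∀ e, (I.filter fun i => e ∈ bd (K i)).card ≤
      (∑ y ∈ A, if e ∈ G.star y then 1 else 0) + if e ∈ R then 2 else 0 := by
    intro e
    obtain ⟨u, v, huv, he⟩ := exists_ends hG.1 e
    by_cases hR : e ∈ R
    · refine le_trans ?_ (show 2 ≤ _ by simp [hR])
      refine le_trans (Finset.card_le_card (t := (I.filter fun i => u ∈ K i) ∪
        (I.filter fun i => v ∈ K i)) ?_) ((Finset.card_union_le _ _).trans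
          (Nat.add_le_add (h1 u) (h1 v)))
      intro i
      simp only [Finset.mem_filter, Finset.mem_union, mem_bd_iff he]
      tauto
    · have huv' : (G.simpleAvoiding R).Adj u v := ⟨huv, e, hR, he⟩
      by_cases hu : u ∈ A
      · by_cases hv : v ∈ A
        · convert Nat.zero_le _
          rw [Finset.card_eq_zero, Finset.filter_eq_empty_iff]
          intro i _
          have hu' := Finset.disjoint_right.1 (hA i) hu
          have hv' := Finset.disjoint_right.1 (hA i) hv
          rw [mem_bd_iff he]; tauto
        · have : 1 ≤ ∑ y ∈ A, if e ∈ G.star y then 1 else 0 := by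
            refine le_trans ?_ (Finset.single_le_sum (fun _ _ => Nat.zero_le _) hu)
            simp [mem_star_iff he]
          refine le_trans (le_trans (Finset.card_le_card ?_) (h1 v)) (this.trans (Nat.le_add_right _ _))
          intro i
          have hu' := Finset.disjoint_right.1 (hA i) hu
          simp only [Finset.mem_filter, mem_bd_iff he]; tauto
      · by_cases hv : v ∈ A
        · have : 1 ≤ ∑ y ∈ A, if e ∈ G.star y then 1 else 0 := by
            refine le_trans ?_ (Finset.single_le_sum (fun _ _ => Nat.zero_le _) hv)
            simp [mem_star_iff he]
          refine le_trans (le_trans (Finset.card_le_card ?_) (h1 u)) (this.trans (Nat.le_add_right _ _))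
          intro i
          have hu' := Finset.disjoint_right.1 (hA i) hv
          simp only [Finset.mem_filter, mem_bd_iff he]; tauto
        · convert Nat.zero_le _
          rw [Finset.card_eq_zero, Finset.filter_eq_empty_iff]
          intro i _ h
          rcases (mem_bd_iff he).1 h with ⟨h3, h4⟩ | ⟨h3, h4⟩
          · exact h4 (hsep i _ _ h3 hv huv')
          · exact h4 (hsep i _ _ h3 hu huv'.symm)
  calc ∑ i ∈ I, (bd (K i)).card
      = ∑ e : G.E, (I.filter fun i => e ∈ bd (K i)).card := by
        simp_rw [Finset.card_filter]
        rw [Finset.sum_comm]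
        refine Finset.sum_congr rfl fun i _ => ?_
        rw [← Finset.card_filter, Finset.filter_univ_mem]
    _ ≤ ∑ e : G.E, ((∑ y ∈ A, if e ∈ G.star y then 1 else 0) + if e ∈ R then 2 else 0) :=
        Finset.sum_le_sum fun e _ => h2 e
    _ = 3 * A.card + 2 * R.card := by
        rw [Finset.sum_add_distrib, Finset.sum_comm]
        simp_rw [← Finset.card_filter, Finset.filter_univ_mem, hG.card_star]
        simp [mul_comm]

/-- Petersen's theorem: a cubic graph without small cuts has a perfect matching that avoids any
two given edges. -/
theorem exists_perfect_matching (hG : G.Cubic)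
    (h2 : ∀ D : Finset G.V, D.Nonempty → D ≠ Finset.univ → 2 ≤ (bd D).card)
    (R : Finset G.E) (hR : R.card ≤ 2) :
    ∃ M : Finset G.E, Disjoint M R ∧ ∀ v, (M ∩ G.star v).card = 1 := by
  have hpm : ∃ M : (G.simpleAvoiding R).Subgraph, M.IsPerfectMatching := by
    rw [SimpleGraph.tutte]
    intro A hA
    unfold SimpleGraph.IsTutteViolator at hA
    set W := ((⊤ : (G.simpleAvoiding R).Subgraph).deleteVerts A) with hW
    have hWv : ∀ v, v ∈ W.verts ↔ v ∉ A := by intro v; simp [hW]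
    let K : W.coe.ConnectedComponent → Finset G.V := fun c =>
      Finset.univ.filter fun v => ∃ h : v ∈ W.verts, W.coe.connectedComponentMk ⟨v, h⟩ = c
    have hKm : ∀ c v, v ∈ K c ↔ ∃ h : v ∈ W.verts, W.coe.connectedComponentMk ⟨v, h⟩ = c := by
      intro c v; simp [K]
    have hKc : ∀ c, (K c).card = c.supp.ncard := by
      intro c
      rw [← Set.ncard_image_of_injective _ Subtype.val_injective, ← Set.ncard_coe_finset]
      congr 1
      ext v
      simp [hKm, SimpleGraph.ConnectedComponent.mem_supp_iff]
    have hodd : Even (W.coe.oddComponents.ncard + A.ncard) := by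
      have h3 := W.coe.odd_ncard_oddComponents
      have h4 : Nat.card W.verts + A.ncard = Fintype.card G.V := by
        have : W.verts = Aᶜ := by ext v; simp [hWv]
        rw [Nat.card_coe_set_eq, this, add_comm, Set.ncard_add_ncard_compl, Nat.card_eq_fintype_card]
      have h5 := even_card hG
      rw [← h4] at h5
      rw [← Nat.not_even_iff_odd, ← Nat.not_even_iff_odd] at h3
      rw [Nat.even_add] at h5 ⊢
      tauto
    have hfin := W.coe.oddComponents.toFinite
    have key := sum_card_bd_le hG R A.toFinset hfin.toFinset K ?_ ?_ ?_
    · have h3 : ∀ c ∈ hfin.toFinset, 3 ≤ (bd (K c)).card := by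
        intro c hc
        have hc : Odd c.supp.ncard := by simpa [SimpleGraph.oddComponents] using hc
        rw [← hKc] at hc
        have h4 := hG.three_mul_card (K c)
        have h5 : Odd (bd (K c)).card := by
          obtain ⟨k, hk⟩ := hc
          exact ⟨3 * k + 1 - (inner (K c)).card, by omega⟩
        have h6 := h2 (K c) (Finset.card_pos.1 hc.pos) ?_
        · obtain ⟨k, hk⟩ := h5; omega
        · rintro h
          rw [h, Finset.card_univ] at hc
          exact Nat.not_even_iff_odd.2 hc (even_card hG)
      have h4 := Finset.card_nsmul_le_sum _ _ _ h3
      rw [← Set.ncard_eq_toFinset_card _ hfin] at h4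
      rw [← Set.ncard_eq_toFinset_card'] at key
      obtain ⟨k, hk⟩ := hodd
      rw [smul_eq_mul] at h4
      omega
    · intro c
      rw [Finset.disjoint_left]
      intro v hv
      obtain ⟨h, -⟩ := (hKm _ _).1 hv
      simpa using (hWv v).1 h
    · intro c c' x h h'
      obtain ⟨h, h1⟩ := (hKm _ _).1 h
      obtain ⟨h', h3⟩ := (hKm _ _).1 h'
      rw [← h1, ← h3]
    · intro c x y hx hy hxy
      obtain ⟨h, h1⟩ := (hKm _ _).1 hx
      have hy : y ∉ A := by simpa using hy
      refine (hKm _ _).2 ⟨(hWv y).2 hy, ?_⟩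
      rw [← h1, SimpleGraph.ConnectedComponent.eq]
      refine SimpleGraph.Adj.reachable ?_
      rw [SimpleGraph.Subgraph.coe_adj]
      exact SimpleGraph.Subgraph.deleteVerts_adj.2 ⟨trivial, hy, trivial, (hWv x).1 h, hxy.symm⟩
  obtain ⟨M, hM⟩ := hpm
  rw [SimpleGraph.Subgraph.isPerfectMatching_iff] at hM
  choose μ hμ hμ' using hM
  have hadj : ∀ v, ∃ e ∉ R, G.ends e = s(v, μ v) := fun v => (M.adj_sub (hμ v)).2
  have hμμ : ∀ v, μ (μ v) = v := fun v => (hμ' (μ v) v (hμ v).symm).symm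
  have hpick : ∀ p : {p : Sym2 G.V // ∃ e ∉ R, G.ends e = p}, ∃ e ∉ R, G.ends e = p.1 :=
    fun p => p.2
  choose pick hpickR hpick using hpick
  refine ⟨Finset.univ.image fun v => pick ⟨s(v, μ v), hadj v⟩, ?_, fun v => ?_⟩
  · rw [Finset.disjoint_left]
    intro e he
    obtain ⟨v, -, rfl⟩ := Finset.mem_image.1 he
    exact hpickR _
  · rw [Finset.card_eq_one]
    refine ⟨pick ⟨s(v, μ v), hadj v⟩, ?_⟩
    ext e
    simp only [Finset.mem_inter, Finset.mem_image, Finset.mem_univ, true_and,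
      Finset.mem_singleton]
    constructor
    · rintro ⟨⟨w, rfl⟩, h⟩
      rw [mem_star_iff (hpick _)] at h
      congr 2
      rcases h with rfl | rfl
      · rfl
      · rw [hμμ, Sym2.eq_swap]
    · rintro rfl
      exact ⟨⟨v, rfl⟩, by rw [mem_star_iff (hpick _)]; exact .inl rfl⟩

/-- The vertices of `C` with an edge leaving `C`. -/
noncomputable def pend (C : Finset G.V) : Finset G.V :=
  C.filter fun v => (G.star v ∩ bd C).Nonempty

theorem mem_pend {C : Finset G.V} {v : G.V} : v ∈ pend C ↔ v ∈ C ∧ (G.star v ∩ bd C).Nonempty := by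
  simp [pend]

/-- Which of the two halves of a split vertex an edge is attached to. -/
noncomputable def side (C : Finset G.V) (d : G.V → G.E) (v : G.V) (e : G.E) : Bool :=
  decide (v ∈ pend C → e = d v)

/-- The half of `v` to which the edge `e` is attached. -/
noncomputable def splitNode (C : Finset G.V) (d : G.V → G.E) (e : G.E) (v : G.V) (hv : v ∈ C) :
    {p : G.V × Bool // p.1 ∈ C ∧ (p.2 = false → p.1 ∈ pend C)} :=
  ⟨(v, side C d v e), hv, fun h => by by_contra h'; simp [side, h'] at h⟩

/-- The cubic graph obtained from the graph induced on `C` by replacing each vertex `v` with an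
edge leaving `C` by a double edge, whose one end takes over the edge `d v`. -/
noncomputable abbrev splitGraph (C : Finset G.V) (d : G.V → G.E) : Multigraph where
  V := {p : G.V × Bool // p.1 ∈ C ∧ (p.2 = false → p.1 ∈ pend C)}
  E := {e : G.E // e ∈ inner C} ⊕ ({u : G.V // u ∈ pend C} × Bool)
  ends := Sum.elim
    (fun e => (G.ends e.1).pmap (splitNode C d e.1) (mem_inner.1 e.2))
    (fun x => s(⟨(x.1.1, true), (mem_pend.1 x.1.2).1, fun h => by simp at h⟩,
      ⟨(x.1.1, false), (mem_pend.1 x.1.2).1, fun _ => x.1.2⟩))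

variable {C : Finset G.V} {d : G.V → G.E}

theorem splitGraph_mem_star_inl {e : {e : G.E // e ∈ inner C}} {p : (splitGraph C d).V} :
    (Sum.inl e : (splitGraph C d).E) ∈ (splitGraph C d).star p ↔
      e.1 ∈ G.star p.1.1 ∧ side C d p.1.1 e.1 = p.1.2 := by
  rw [mem_star, mem_star]
  refine (Sym2.mem_pmap_iff (splitNode C d e.1) (G.ends e.1) (mem_inner.1 e.2) p).trans ?_
  constructor
  · rintro ⟨v, hv, rfl⟩
    exact ⟨hv, rfl⟩
  · rintro ⟨h1, h2⟩
    exact ⟨p.1.1, h1, Subtype.ext (Prod.ext rfl h2.symm)⟩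

theorem splitGraph_mem_star_inr {x : {u : G.V // u ∈ pend C} × Bool} {p : (splitGraph C d).V} :
    (Sum.inr x : (splitGraph C d).E) ∈ (splitGraph C d).star p ↔ x.1.1 = p.1.1 := by
  rw [mem_star]
  change p ∈ s(_, _) ↔ _
  rw [Sym2.mem_iff]
  obtain ⟨⟨v, i⟩, hp⟩ := p
  cases i <;> simp [Subtype.ext_iff, eq_comm]

theorem splitGraph_loopless (hl : G.Loopless) : (splitGraph C d).Loopless := by
  have key : ∀ {α : Type} (z : Sym2 α), z.IsDiag → ∀ p ∈ z, ∀ q ∈ z, p = q := by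
    intro α z
    induction z using Sym2.ind with
    | _ x y => intro h p hp q hq; simp at h hp hq; grind
  rintro (e | x) h
  · obtain ⟨u, v, huv, he⟩ := exists_ends hl e.1
    have h1 := key _ h
    have h2 : ∀ w (hw : w ∈ G.ends e.1), ∃ p ∈ (splitGraph C d).ends (Sum.inl e), p.1.1 = w :=
      fun w hw => ⟨splitNode C d e.1 w (mem_inner.1 e.2 w hw),
        (Sym2.mem_pmap_iff (splitNode C d e.1) (G.ends e.1) (mem_inner.1 e.2) _).2 ⟨w, hw, rfl⟩, rfl⟩
    obtain ⟨p, hp, rfl⟩ := h2 u (by simp [he])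
    obtain ⟨q, hq, rfl⟩ := h2 v (by simp [he])
    exact huv (by rw [h1 p hp q hq])
  · change Sym2.IsDiag s(_, _) at h
    simp [Subtype.ext_iff] at h

/-- The edges of `C` that belong to a set of edges of the split graph. -/
noncomputable def unsplit (M : Finset (splitGraph C d).E) : Finset G.E :=
  (inner C).filter fun e => ∃ h : e ∈ inner C, (Sum.inl ⟨e, h⟩ : (splitGraph C d).E) ∈ M

theorem splitGraph_card_inter_star (M : Finset (splitGraph C d).E) (p : (splitGraph C d).V) :
    (M ∩ (splitGraph C d).star p).card =
      ((unsplit M ∩ G.star p.1.1).filter fun e => side C d p.1.1 e = p.1.2).card +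
      (Finset.univ.filter fun x : {u : G.V // u ∈ pend C} × Bool =>
        x.1.1 = p.1.1 ∧ (Sum.inr x : (splitGraph C d).E) ∈ M).card := by
  have h1 : M ∩ (splitGraph C d).star p =
    (((unsplit M ∩ G.star p.1.1).filter fun e => side C d p.1.1 e = p.1.2).subtype
      (fun e => e ∈ inner C)).disjSum
      (Finset.univ.filter fun x : {u : G.V // u ∈ pend C} × Bool =>
        x.1.1 = p.1.1 ∧ (Sum.inr x : (splitGraph C d).E) ∈ M) := by
    ext (e | x)
    · rw [Finset.mem_inter, splitGraph_mem_star_inl, Finset.inl_mem_disjSum]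
      simp [unsplit]; tauto
    · rw [Finset.mem_inter, splitGraph_mem_star_inr, Finset.inr_mem_disjSum]
      simp; tauto
  rw [h1, Finset.card_disjSum, Finset.card_subtype, Finset.filter_true_of_mem]
  intro e he
  simp [unsplit] at he
  exact he.1.1.1

theorem card_inner_inter_star (hG : G.Cubic) {v : G.V} (hv : v ∈ C) :
    (inner C ∩ G.star v).card + (G.star v ∩ bd C).card = 3 := by
  rw [← hG.card_star v, ← Finset.card_union_of_disjoint]
  · congr 1
    ext e
    have := star_subset hG.1 hv (e := e)
    simp only [Finset.mem_union, Finset.mem_inter]; tauto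
  · rw [Finset.disjoint_left]
    intro e he he'
    exact notMem_bd_of_mem_inner (Finset.mem_inter.1 he).1 (Finset.mem_inter.1 he').2

/-- The number of the two parallel edges at `v` that are used by `M`. -/
noncomputable def pairCount (M : Finset (splitGraph C d).E) (v : G.V) : ℕ :=
  (Finset.univ.filter fun x : {u : G.V // u ∈ pend C} × Bool =>
    x.1.1 = v ∧ (Sum.inr x : (splitGraph C d).E) ∈ M).card

theorem pairCount_of_notMem (M : Finset (splitGraph C d).E) {v : G.V} (hv : v ∉ pend C) :
    pairCount M v = 0 := by
  rw [pairCount, Finset.card_eq_zero, Finset.filter_eq_empty_iff]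
  rintro ⟨u, i⟩ - ⟨rfl, -⟩
  exact hv u.2

theorem pairCount_univ {v : G.V} (hv : v ∈ pend C) :
    pairCount (C := C) (d := d) Finset.univ v = 2 := by
  have : (Finset.univ.filter fun x : {u : G.V // u ∈ pend C} × Bool =>
    x.1.1 = v ∧ (Sum.inr x : (splitGraph C d).E) ∈ Finset.univ) =
      {(⟨v, hv⟩, true), (⟨v, hv⟩, false)} := by
    ext ⟨u, i⟩
    cases i <;> simp [Subtype.ext_iff]
  rw [pairCount, this, Finset.card_pair (by simp)]

theorem unsplit_univ : unsplit (C := C) (d := d) Finset.univ = inner C := by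
  ext e; simp [unsplit]

theorem unsplit_subset (M : Finset (splitGraph C d).E) : unsplit M ⊆ inner C :=
  Finset.filter_subset _ _

theorem side_eq_true_iff {v : G.V} {e : G.E} : side C d v e = true ↔ (v ∈ pend C → e = d v) := by
  simp [side, imp_iff_not_or]

theorem card_side_univ (hG : G.Cubic) (hU : ∀ v ∈ C, (G.star v ∩ bd C).card ≤ 1)
    (hd : ∀ u ∈ pend C, d u ∈ inner C ∩ G.star u) {v : G.V} (hv : v ∈ pend C) (i : Bool) :
    ((inner C ∩ G.star v).filter fun e => side C d v e = i).card = 1 := by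
  have h1 := card_inner_inter_star hG (mem_pend.1 hv).1
  have h2 := hU v (mem_pend.1 hv).1
  have h3 := Finset.card_pos.2 (mem_pend.1 hv).2
  have h4 : ((inner C ∩ G.star v).filter fun e => side C d v e = true) = {d v} := by
    ext e
    simp only [Finset.mem_filter, side_eq_true_iff, hv, true_imp_iff, Finset.mem_singleton]
    constructor
    · exact fun h => h.2
    · rintro rfl; exact ⟨hd _ hv, rfl⟩
  cases i
  · have h5 := Finset.card_filter_add_card_filter_not (s := inner C ∩ G.star v)
      (fun e => side C d v e = true)
    rw [h4, Finset.card_singleton] at h5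
    simp only [Bool.not_eq_true] at h5
    omega
  · rw [h4, Finset.card_singleton]

theorem splitGraph_cubic (hG : G.Cubic) (hU : ∀ v ∈ C, (G.star v ∩ bd C).card ≤ 1)
    (hd : ∀ u ∈ pend C, d u ∈ inner C ∩ G.star u) : (splitGraph C d).Cubic := by
  refine cubic_of_card_star (splitGraph_loopless hG.1) fun p => ?_
  have h := splitGraph_card_inter_star Finset.univ p
  rw [Finset.univ_inter, unsplit_univ] at h
  rw [h]
  change _ + pairCount (C := C) (d := d) Finset.univ p.1.1 = 3
  by_cases hp : p.1.1 ∈ pend C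
  · rw [pairCount_univ hp, card_side_univ hG hU hd hp]
  · have h1 := card_inner_inter_star hG p.2.1
    have h2 : G.star p.1.1 ∩ bd C = ∅ := by
      by_contra h
      exact hp (mem_pend.2 ⟨p.2.1, Finset.nonempty_iff_ne_empty.2 h⟩)
    rw [h2, Finset.card_empty] at h1
    rw [pairCount_of_notMem _ hp, Finset.filter_true_of_mem]
    · exact h1
    · intro e _
      rcases hi : p.1.2 with _ | _
      · exact absurd (p.2.2 hi) hp
      · rw [side_eq_true_iff]; exact fun h => absurd h hp

theorem splitGraph_cut
    (h2 : ∀ D ⊆ C, D.Nonempty → D ≠ C → 2 ≤ (bd D ∩ inner C).card)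
    (D : Finset (splitGraph C d).V) (hD : D.Nonempty) (hD' : D ≠ Finset.univ) :
    2 ≤ (bd D).card := by
  by_cases hs : ∃ (u : G.V) (hu : u ∈ pend C),
      ¬ ((⟨(u, true), (mem_pend.1 hu).1, fun h => by simp at h⟩ : (splitGraph C d).V) ∈ D ↔
        (⟨(u, false), (mem_pend.1 hu).1, fun _ => hu⟩ : (splitGraph C d).V) ∈ D)
  · obtain ⟨u, hu, hs⟩ := hs
    have h3 : ∀ i, (Sum.inr (⟨u, hu⟩, i) : (splitGraph C d).E) ∈ bd D := by
      intro i
      rw [mem_bd_iff (G := splitGraph C d) rfl]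
      tauto
    rw [← Finset.card_pair (a := (Sum.inr (⟨u, hu⟩, true) : (splitGraph C d).E))
      (b := Sum.inr (⟨u, hu⟩, false)) (by simp)]
    exact Finset.card_le_card (by simp [Finset.insert_subset_iff, h3])
  · push Not at hs
    set D' : Finset G.V := C.filter fun v =>
      ∃ h : v ∈ C, (⟨(v, true), h, fun h => by simp at h⟩ : (splitGraph C d).V) ∈ D with hDdef
    have h3 : ∀ p : (splitGraph C d).V, p ∈ D ↔ p.1.1 ∈ D' := by
      rintro ⟨⟨v, i⟩, hv, hi⟩
      simp only [D', Finset.mem_filter, hv, true_and]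
      cases i
      · exact ⟨fun h => ⟨trivial, (hs v (hi rfl)).2 h⟩, fun ⟨_, h⟩ => (hs v (hi rfl)).1 h⟩
      · exact ⟨fun h => ⟨trivial, h⟩, fun ⟨_, h⟩ => h⟩
    have h4 := h2 D' (Finset.filter_subset _ _) ?_ ?_
    · refine h4.trans ?_
      have h5 : ((bd D' ∩ inner C).attach.image fun e =>
          (Sum.inl ⟨e.1, (Finset.mem_inter.1 e.2).2⟩ : (splitGraph C d).E)) ⊆ bd D := by
        intro e' he'
        obtain ⟨⟨e, he⟩, -, rfl⟩ := Finset.mem_image.1 he'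
        have heC := (Finset.mem_inter.1 he).2
        obtain ⟨u, hu, v, hv, h⟩ := mem_bd.1 (Finset.mem_inter.1 he).1
        have huv : u ≠ v := fun h => hv (h ▸ hu)
        have hC := (mem_inner_iff h).1 heC
        rw [mem_bd]
        refine ⟨splitNode C d e u hC.1, (h3 _).2 hu, splitNode C d e v hC.2,
          fun h' => hv ((h3 _).1 h'), ?_⟩
        rw [← Sym2.mem_and_mem_iff (fun h' => huv (congrArg (fun p => p.1.1) h'))]
        exact ⟨(Sym2.mem_pmap_iff (splitNode C d e) (G.ends e) (mem_inner.1 heC) _).2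
            ⟨u, by simp [h], rfl⟩,
          (Sym2.mem_pmap_iff (splitNode C d e) (G.ends e) (mem_inner.1 heC) _).2
            ⟨v, by simp [h], rfl⟩⟩
      refine le_trans ?_ (Finset.card_le_card h5)
      rw [Finset.card_image_of_injective, Finset.card_attach]
      intro e e' h
      exact Subtype.ext (Subtype.mk.inj (Sum.inl.inj h))
    · obtain ⟨p, hp⟩ := hD
      exact ⟨_, (h3 p).1 hp⟩
    · intro h
      apply hD'
      ext p
      simp only [Finset.mem_univ, iff_true]
      rw [h3, h]; exact p.2.1

/-- The complement in `C` of a perfect matching of the split graph. -/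
theorem card_sdiff_unsplit (hG : G.Cubic) (hU : ∀ v ∈ C, (G.star v ∩ bd C).card ≤ 1)
    {M : Finset (splitGraph C d).E}
    (hM : ∀ p, (M ∩ (splitGraph C d).star p).card = 1) {v : G.V} (hv : v ∈ C) :
    (v ∉ pend C → ((inner C \ unsplit M) ∩ G.star v).card = 2) ∧
    (v ∈ pend C → ((inner C \ unsplit M) ∩ G.star v).card = 2 * pairCount M v ∧
      pairCount M v ≤ 1) := by
  have h1 := card_inner_inter_star hG hv
  have h2 : ((inner C \ unsplit M) ∩ G.star v).card + (unsplit M ∩ G.star v).card =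
      (inner C ∩ G.star v).card := by
    rw [← Finset.card_union_of_disjoint]
    · congr 1
      ext e
      have := @unsplit_subset _ _ _ M e
      simp only [Finset.mem_union, Finset.mem_inter, Finset.mem_sdiff]; tauto
    · rw [Finset.disjoint_left]
      simp only [Finset.mem_inter, Finset.mem_sdiff]; tauto
  have h3 := Finset.card_filter_add_card_filter_not (s := unsplit M ∩ G.star v)
    (fun e => side C d v e = true)
  have h4 := splitGraph_card_inter_star M ⟨(v, true), hv, fun h => by simp at h⟩
  rw [hM] at h4
  change 1 = _ + pairCount M v at h4
  constructor
  · intro hp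
    have h5 : G.star v ∩ bd C = ∅ := by
      by_contra h
      exact hp (mem_pend.2 ⟨hv, Finset.nonempty_iff_ne_empty.2 h⟩)
    rw [pairCount_of_notMem _ hp, Finset.filter_true_of_mem] at h4
    · rw [h5, Finset.card_empty] at h1
      simp only at h4
      omega
    · intro e _
      exact side_eq_true_iff.2 fun h => absurd h hp
  · intro hp
    have h5 := splitGraph_card_inter_star M ⟨(v, false), hv, fun _ => hp⟩
    rw [hM] at h5
    change 1 = _ + pairCount M v at h5
    have h6 := hU v hv
    have h7 := Finset.card_pos.2 (mem_pend.1 hp).2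
    simp only [Bool.not_eq_true] at h3 h4 h5
    omega

/-- A bridgeless piece `C` all of whose vertices have degree two or three has an even subgraph
containing all vertices of degree three; a given vertex of degree two can be included or
avoided. -/
theorem exists_even_subgraph (hG : G.Cubic) (hU : ∀ v ∈ C, (G.star v ∩ bd C).card ≤ 1)
    (h2 : ∀ D ⊆ C, D.Nonempty → D ≠ C → 2 ≤ (bd D ∩ inner C).card) (i : ℕ) (hi : i = 0 ∨ i = 2)
    (u₀ : G.V) :
    ∃ F ⊆ inner C, (∀ v ∈ C, v ∉ pend C → (F ∩ G.star v).card = 2) ∧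
      (∀ v ∈ C, (F ∩ G.star v).card = 0 ∨ (F ∩ G.star v).card = 2) ∧
      (u₀ ∈ pend C → (F ∩ G.star u₀).card = i) := by
  have hd : ∀ u, ∃ e, u ∈ pend C → e ∈ inner C ∩ G.star u := by
    intro u
    by_cases hu : u ∈ pend C
    · have h1 := card_inner_inter_star hG (mem_pend.1 hu).1
      have h3 := hU u (mem_pend.1 hu).1
      obtain ⟨e, he⟩ := Finset.card_pos.1 (show 0 < (inner C ∩ G.star u).card by omega)
      exact ⟨e, fun _ => he⟩
    · obtain ⟨e, -⟩ := Finset.card_pos.1 (show 0 < (G.star u).card by rw [hG.card_star]; omega)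
      exact ⟨e, fun h => absurd h hu⟩
  choose d hd using hd
  have main : ∀ R : Finset (splitGraph C d).E, R.card ≤ 2 → ∃ M, Disjoint M R ∧
      ∀ v, (M ∩ (splitGraph C d).star v).card = 1 :=
    fun R hR => exists_perfect_matching (splitGraph_cubic hG hU hd)
      (fun D hD hD' => splitGraph_cut h2 D hD hD') R hR
  have main' : ∃ M : Finset (splitGraph C d).E, (∀ v, (M ∩ (splitGraph C d).star v).card = 1) ∧
      (u₀ ∈ pend C → ((inner C \ unsplit M) ∩ G.star u₀).card = i) := by
    by_cases hu : u₀ ∈ pend C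
    · rcases hi with rfl | rfl
      · obtain ⟨M, hMR, hM⟩ := main {Sum.inr (⟨u₀, hu⟩, true), Sum.inr (⟨u₀, hu⟩, false)}
          Finset.card_le_two
        refine ⟨M, hM, fun _ => ?_⟩
        rw [((card_sdiff_unsplit hG hU hM (mem_pend.1 hu).1).2 hu).1]
        suffices pairCount M u₀ = 0 by omega
        rw [pairCount, Finset.card_eq_zero, Finset.filter_eq_empty_iff]
        rintro ⟨⟨u, hu'⟩, i⟩ - ⟨h, h'⟩
        simp only at h
        subst h
        refine Finset.disjoint_left.1 hMR h' ?_
        cases i <;> simp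
      · obtain ⟨M, hMR, hM⟩ := main {Sum.inl ⟨d u₀, (Finset.mem_inter.1 (hd u₀ hu)).1⟩}
          (by rw [Finset.card_singleton]; omega)
        refine ⟨M, hM, fun _ => ?_⟩
        have h3 := (card_sdiff_unsplit hG hU hM (mem_pend.1 hu).1).2 hu
        have h4 : 0 < ((inner C \ unsplit M) ∩ G.star u₀).card := by
          refine Finset.card_pos.2 ⟨d u₀, ?_⟩
          have h5 := Finset.mem_inter.1 (hd u₀ hu)
          simp only [Finset.mem_inter, Finset.mem_sdiff, h5.1, h5.2, true_and, and_true]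
          intro h6
          obtain ⟨-, h6, h7⟩ := Finset.mem_filter.1 h6
          exact Finset.disjoint_left.1 hMR h7 (by simp)
        omega
    · obtain ⟨M, -, hM⟩ := main ∅ (by simp)
      exact ⟨M, hM, fun h => absurd h hu⟩
  obtain ⟨M, hM, hMi⟩ := main'
  refine ⟨inner C \ unsplit M, Finset.sdiff_subset,
    fun v hv => (card_sdiff_unsplit hG hU hM hv).1, fun v hv => ?_, hMi⟩
  by_cases hp : v ∈ pend C
  · have := (card_sdiff_unsplit hG hU hM hv).2 hp
    omega
  · exact .inr ((card_sdiff_unsplit hG hU hM hv).1 hp)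

/-- The sets `∂_S(y)` for the vertices `y` of the Sylvester graph. -/
def sylvesterStars : Finset (Finset (Fin 15)) :=
  {{0, 5, 10}, {0, 1, 2}, {1, 3, 4}, {2, 3, 4}, {5, 6, 7}, {6, 8, 9}, {7, 8, 9},
    {10, 11, 12}, {11, 13, 14}, {12, 13, 14}}

/-- The star of `v` is mapped onto a star of the Sylvester graph. -/
def Good (f : G.E → Fin 15) (v : G.V) : Prop := (G.star v).image f ∈ sylvesterStars

/-- Two edges at `v` have the same colour. -/
def Rep (f : G.E → Fin 15) (v : G.V) : Prop :=
  ∃ e ∈ G.star v, ∃ e' ∈ G.star v, e ≠ e' ∧ f e = f e'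

theorem good_congr {f g : G.E → Fin 15} {v : G.V} (h : ∀ e ∈ G.star v, f e = g e) :
    Good f v ↔ Good g v := by
  rw [Good, Good, Finset.image_congr (fun e he => h e he)]

theorem rep_congr {f g : G.E → Fin 15} {v : G.V} (h : ∀ e ∈ G.star v, f e = g e) :
    Rep f v ↔ Rep g v := by
  have key : ∀ {f g : G.E → Fin 15}, (∀ e ∈ G.star v, f e = g e) → Rep f v → Rep g v := by
    rintro f g h ⟨e, he, e', he', hne, hf⟩
    exact ⟨e, he, e', he', hne, by rw [← h e he, ← h e' he', hf]⟩
  exact ⟨key h, key fun e he => (h e he).symm⟩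

theorem good_of_star {f : G.E → Fin 15} {v : G.V} {e₁ e₂ e₃ : G.E}
    (hs : G.star v = {e₁, e₂, e₃}) (h : {f e₁, f e₂, f e₃} ∈ sylvesterStars) : Good f v := by
  rw [Good, hs]
  simpa [Finset.image_insert] using h

/-- The edges at a vertex of degree two in `F`. -/
theorem Cubic.exists_star_eq_of_card_two (hG : G.Cubic) {F : Finset G.E} {v : G.V}
    (h : (F ∩ G.star v).card = 2) : ∃ e₁ e₂ e₃, e₁ ≠ e₂ ∧ e₁ ≠ e₃ ∧ e₂ ≠ e₃ ∧
      G.star v = {e₁, e₂, e₃} ∧ F ∩ G.star v = {e₁, e₂} ∧ e₁ ∈ F ∧ e₂ ∈ F ∧ e₃ ∉ F := by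
  obtain ⟨e₁, e₂, h12, hF⟩ := Finset.card_eq_two.1 h
  have h1 : (G.star v \ (F ∩ G.star v)).card = 1 := by
    rw [Finset.card_sdiff_of_subset Finset.inter_subset_right, h, hG.card_star]
  obtain ⟨e₃, h3⟩ := Finset.card_eq_one.1 h1
  have h4 : e₃ ∈ G.star v \ (F ∩ G.star v) := by simp [h3]
  have m1 : e₁ ∈ F ∩ G.star v := by simp [hF]
  have m2 : e₂ ∈ F ∩ G.star v := by simp [hF]
  have h5 : G.star v = {e₁, e₂, e₃} := by
    rw [← Finset.union_sdiff_of_subset (Finset.inter_subset_right (s₁ := F) (s₂ := G.star v)), h3,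
      hF]
    ext; simp
  simp only [Finset.mem_sdiff, Finset.mem_inter, not_and] at h4 m1 m2
  refine ⟨e₁, e₂, e₃, h12, ?_, ?_, h5, hF, m1.1, m2.1, fun h => h4.2 h h4.1⟩
  · rintro rfl; exact h4.2 m1.1 m1.2
  · rintro rfl; exact h4.2 m2.1 m2.2

/-- A piece `C` without small inner cuts and without triangles, together with an even subgraph
`F`. -/
structure EvenPiece (C : Finset G.V) (F : Finset G.E) : Prop where
  cubic : G.Cubic
  pend_le : ∀ v ∈ C, (G.star v ∩ bd C).card ≤ 1
  cut : ∀ D ⊆ C, D.Nonempty → D ≠ C → 2 ≤ (bd D ∩ inner C).card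
  noTri : ∀ x ∈ C, ∀ y ∈ C, ∀ z ∈ C, ∀ e₁ e₂ e₃, ¬ G.IsTriangle e₁ e₂ e₃ x y z
  subset : F ⊆ inner C
  deg : ∀ v ∈ C, (F ∩ G.star v).card = 0 ∨ (F ∩ G.star v).card = 2
  deg_two : ∀ v ∈ C, v ∉ pend C → (F ∩ G.star v).card = 2

namespace EvenPiece

variable {C : Finset G.V} {F : Finset G.E} (hP : EvenPiece C F)
include hP

theorem comp_subset {v : G.V} (hv : v ∈ C) : comp (F : Set G.E) v ⊆ C := by
  intro w hw
  induction mem_comp.1 hw with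
  | refl => exact hv
  | tail h1 h2 _ =>
    obtain ⟨e, he, h⟩ := h2
    exact ((mem_inner_iff h).1 (hP.subset he)).2

theorem card_eq_two_of_mem_comp {v w : G.V} (hv : v ∈ C) (h2 : (F ∩ G.star v).card = 2)
    (hw : w ∈ comp (F : Set G.E) v) : (F ∩ G.star w).card = 2 := by
  have hwC := hP.comp_subset hv hw
  rcases mem_comp.1 hw with _ | ⟨h1, e, he, h⟩
  · exact h2
  · rcases hP.deg w hwC with h3 | h3
    · rw [Finset.card_eq_zero] at h3
      have : e ∈ F ∩ G.star w := Finset.mem_inter.2 ⟨he, (mem_star_iff h).2 (.inr rfl)⟩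
      rw [h3] at this; simp at this
    · exact h3

theorem two_le_card_comp {v : G.V} (h2 : (F ∩ G.star v).card = 2) :
    2 ≤ (comp (F : Set G.E) v).card := by
  obtain ⟨e, he⟩ := Finset.card_pos.1 (show 0 < (F ∩ G.star v).card by omega)
  obtain ⟨w, hvw, h⟩ := exists_ends_of_mem hP.cubic.1 (Finset.mem_inter.1 he).2
  rw [← Finset.card_pair hvw]
  refine Finset.card_le_card ?_
  simp only [Finset.insert_subset_iff, Finset.singleton_subset_iff, self_mem_comp, true_and]
  exact mem_comp.2 (.tail .refl ⟨e, (Finset.mem_inter.1 he).1, h⟩)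

theorem exists_joining {x y z : G.V} (hxy : x ≠ y)
    (hclosed : ∀ e ∈ F, e ∉ bd {x, y, z}) (hx : (F ∩ G.star x).card = 2)
    (hy : (F ∩ G.star y).card = 2) (hz : (F ∩ G.star z).card = 2) :
    ∃ e ∈ F, G.ends e = s(x, y) := by
  by_contra! hno
  have h1 : ∀ v, (v = x ∨ v = y) → F ∩ G.star v ⊆ F ∩ G.star z := by
    intro v hv e he
    obtain ⟨heF, hev⟩ := Finset.mem_inter.1 he
    obtain ⟨w, hvw, h⟩ := exists_ends_of_mem hP.cubic.1 hev
    have h3 := hclosed e heF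
    have h4 := hno e heF
    rw [mem_bd_iff h] at h3
    rw [h] at h4
    simp only [Finset.mem_insert, Finset.mem_singleton] at h3
    have h5 : w = z := by
      rcases hv with rfl | rfl
      · by_contra h6
        exact h3 (.inl ⟨by simp, by rintro (rfl | rfl | rfl) <;> simp_all⟩)
      · by_contra h6
        exact h3 (.inl ⟨by simp, by rintro (rfl | rfl | rfl) <;> simp_all [Sym2.eq_swap]⟩)
    exact Finset.mem_inter.2 ⟨heF, (mem_star_iff h).2 (.inr h5.symm)⟩
  have h2 : (F ∩ G.star x) ∪ (F ∩ G.star y) ⊆ F ∩ G.star z :=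
    Finset.union_subset (h1 x (.inl rfl)) (h1 y (.inr rfl))
  have h3 := Finset.card_le_card h2
  rw [Finset.card_union_of_disjoint] at h3
  · omega
  · rw [Finset.disjoint_left]
    intro e he he'
    obtain ⟨w, hvw, h⟩ := exists_ends_of_mem hP.cubic.1 (Finset.mem_inter.1 he).2
    have h4 := (mem_star_iff h).1 (Finset.mem_inter.1 he').2
    exact hno e (Finset.mem_inter.1 he).1 (by rw [h]; grind)

theorem five_le_card_comp {v : G.V} (hv : v ∈ C) (h2 : (F ∩ G.star v).card = 2)
    (hodd : Odd (comp (F : Set G.E) v).card) : 5 ≤ (comp (F : Set G.E) v).card := by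
  have h3 := hP.two_le_card_comp h2
  by_contra h5
  have h6 : (comp (F : Set G.E) v).card = 3 := by obtain ⟨k, hk⟩ := hodd; omega
  obtain ⟨x, y, z, hxy, hxz, hyz, hK⟩ := Finset.card_eq_three.1 h6
  have hcl : ∀ e ∈ F, e ∉ bd (comp (F : Set G.E) v) := fun e he h => notMem_of_mem_bd_comp h he
  have hd : ∀ w ∈ comp (F : Set G.E) v, (F ∩ G.star w).card = 2 :=
    fun w hw => hP.card_eq_two_of_mem_comp hv h2 hw
  have hC := hP.comp_subset hv
  rw [hK] at hcl hd hC
  have hx := hd x (by simp)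
  have hy := hd y (by simp)
  have hz := hd z (by simp)
  obtain ⟨e₁, -, h₁⟩ := hP.exists_joining hxy hcl hx hy hz
  obtain ⟨e₂, -, h₂⟩ := hP.exists_joining hyz
    (by rwa [show ({y, z, x} : Finset G.V) = {x, y, z} by ext; simp; tauto]) hy hz hx
  obtain ⟨e₃, -, h₃⟩ := hP.exists_joining hxz
    (by rwa [show ({x, z, y} : Finset G.V) = {x, y, z} by ext; simp; tauto]) hx hz hy
  exact hP.noTri x (hC (by simp)) y (hC (by simp)) z (hC (by simp)) e₁ e₂ e₃
    ⟨hxy, hyz, hxz, h₁, h₂, h₃⟩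

end EvenPiece

theorem ZMod.two_eq_zero_or_one (a : ZMod 2) : a = 0 ∨ a = 1 := by
  revert a; decide

/-- The weight of a colour of an edge leading to a triangle. -/
def wt (x : Fin 15) : ℤ := if x ∈ ({1, 2} : Finset (Fin 15)) then 2 else -3

/-- The vertices of `C` which are not good. -/
noncomputable def bad (f : G.E → Fin 15) (C : Finset G.V) : Finset G.V :=
  C.filter fun v => ¬ Good f v

theorem sum_card_inter_comp_le {A : Set G.E} {ρ : G.V → G.V}
    (hρ' : ∀ v w, G.Reach A v w → ρ v = ρ w) {R : Finset G.V} (hR : ∀ r ∈ R, ρ r = r)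
    (Y : Finset G.V) : ∑ r ∈ R, (Y ∩ comp A r).card ≤ Y.card := by
  rw [← Finset.card_biUnion]
  · exact Finset.card_le_card (Finset.biUnion_subset.2 fun r _ => Finset.inter_subset_left)
  · intro r hr r' hr' hne
    rw [Function.onFun, Finset.disjoint_left]
    intro w hw hw'
    rw [Finset.mem_inter, mem_comp] at hw hw'
    exact hne (by rw [← hR r hr, ← hR r' hr', hρ' _ _ hw.2, hρ' _ _ hw'.2])

theorem five_mul_card_le {A : Set G.E} {ρ : G.V → G.V}
    (hρ' : ∀ v w, G.Reach A v w → ρ v = ρ w) {R : Finset G.V} (hR : ∀ r ∈ R, ρ r = r)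
    {Q U : Finset G.V} (hQ : ∀ r ∈ R, comp A r ⊆ Q)
    (h5 : ∀ r ∈ R, 5 ≤ (comp A r).card + 3 * (U ∩ comp A r).card) :
    5 * R.card ≤ Q.card + 3 * U.card := by
  have h1 := sum_card_inter_comp_le hρ' hR Q
  have h2 := sum_card_inter_comp_le hρ' hR U
  have h3 := Finset.sum_le_sum h5
  rw [Finset.sum_add_distrib, ← Finset.mul_sum] at h3
  rw [Finset.sum_congr rfl fun r hr => by rw [Finset.inter_eq_right.2 (hQ r hr)]] at h1
  simp only [Finset.sum_const, smul_eq_mul] at h3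
  omega

namespace EvenPiece

variable {C : Finset G.V} {F : Finset G.E} (hP : EvenPiece C F)
include hP

/-- A vertex missed by `F` has one boundary edge and two inner edges. -/
theorem exists_star_eq_of_card_zero {v : G.V} (hv : v ∈ C) (h0 : (F ∩ G.star v).card = 0) :
    ∃ e₁ e₂ e₃, e₁ ≠ e₂ ∧ e₁ ≠ e₃ ∧ e₂ ≠ e₃ ∧ G.star v = {e₁, e₂, e₃} ∧ e₁ ∈ inner C \ F ∧
      e₂ ∈ inner C \ F ∧ e₃ ∈ bd C ∧ e₃ ∉ F := by
  have h1 : (inner C ∩ G.star v).card = 2 := by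
    have h2 := card_inner_inter_star hP.cubic hv
    have h3 := hP.pend_le v hv
    have h4 : 0 < (G.star v ∩ bd C).card := by
      by_contra h
      have : v ∉ pend C := fun h' => h (by
        exact Finset.card_pos.2 (mem_pend.1 h').2)
      have := hP.deg_two v hv this
      omega
    omega
  obtain ⟨e₁, e₂, e₃, h12, h13, h23, hs, -, m1, m2, m3⟩ :=
    hP.cubic.exists_star_eq_of_card_two h1
  have hF : ∀ e ∈ G.star v, e ∉ F := by
    intro e he heF
    rw [Finset.card_eq_zero] at h0
    have : e ∈ F ∩ G.star v := Finset.mem_inter.2 ⟨heF, he⟩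
    simp [h0] at this
  refine ⟨e₁, e₂, e₃, h12, h13, h23, hs, ?_, ?_, ?_, hF _ (by simp [hs])⟩
  · exact Finset.mem_sdiff.2 ⟨m1, hF _ (by simp [hs])⟩
  · exact Finset.mem_sdiff.2 ⟨m2, hF _ (by simp [hs])⟩
  · exact (star_subset hP.cubic.1 hv (by simp [hs])).resolve_left m3

/-- Colour `F` with `5, 10` and the remaining edges with `0`, apart from the edges leaving `C`
at `U`, which are coloured `1`. -/
theorem exists_coloring_five_ten {ρ : G.V → G.V} (hρ : ∀ v, G.Reach F v (ρ v))
    (hρ' : ∀ v w, G.Reach F v w → ρ v = ρ w) (U : Finset G.V) (hU : ∀ u ∈ U, ρ u ≠ u)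
    (hUC : U ⊆ pend C) :
    ∃ g : G.E → Fin 15, (∀ e ∈ bd C, g e = if ∃ u ∈ U, e ∈ G.star u then 1 else 0) ∧
      (∀ v ∈ C, Good g v ∨ Rep g v) ∧
      (bad g C).card ≤ (C.filter fun v => (F ∩ G.star v).card = 0).card + U.card +
        (C.filter fun v => (F ∩ G.star v).card = 2 ∧ ρ v = v ∧
          Odd (comp (F : Set G.E) v \ U).card).card := by
  obtain ⟨c, hc⟩ := exists_chain_parity hP.cubic.1 F ρ hρ hρ' fun v => if v ∈ U then 0 else 1
  let g : G.E → Fin 15 := fun e => if e ∈ F then (if c e = 0 then 5 else 10) else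
    if e ∈ bd C ∧ ∃ u ∈ U, e ∈ G.star u then 1 else 0
  have hgF : ∀ e ∈ F, g e = if c e = 0 then 5 else 10 := fun e he => if_pos he
  have hg : ∀ e ∉ F, g e = if e ∈ bd C ∧ ∃ u ∈ U, e ∈ G.star u then 1 else 0 :=
    fun e he => if_neg he
  have hbF : ∀ e ∈ bd C, e ∉ F := fun e he h => notMem_bd_of_mem_inner (hP.subset h) he
  have key : ∀ v ∈ C, Good g v ∨ (Rep g v ∧ ((F ∩ G.star v).card = 0 ∨ v ∈ U ∨
      ((F ∩ G.star v).card = 2 ∧ ρ v = v ∧ Odd (comp (F : Set G.E) v \ U).card))) := by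
    intro v hv
    rcases hP.deg v hv with h0 | h2
    · obtain ⟨e₁, e₂, e₃, h12, -, -, hs, m1, m2, -, -⟩ := hP.exists_star_eq_of_card_zero hv h0
      rw [Finset.mem_sdiff] at m1 m2
      refine .inr ⟨⟨e₁, by simp [hs], e₂, by simp [hs], h12, ?_⟩, .inl h0⟩
      rw [hg _ m1.2, hg _ m2.2, if_neg fun h => notMem_bd_of_mem_inner m1.1 h.1,
        if_neg fun h => notMem_bd_of_mem_inner m2.1 h.1]
    · obtain ⟨e₁, e₂, e₃, h12, -, -, hs, hF, m1, m2, m3⟩ :=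
        hP.cubic.exists_star_eq_of_card_two h2
      have hcv := hc v
      rw [hF, Finset.sum_pair h12] at hcv
      have heq : c e₁ = c e₂ → Rep g v := fun h =>
        ⟨e₁, by simp [hs], e₂, by simp [hs], h12, by rw [hgF _ m1, hgF _ m2, h]⟩
      have hcancel : c e₁ + c e₂ = 0 → c e₁ = c e₂ := by
        generalize c e₁ = x; generalize c e₂ = y; revert x y; decide
      by_cases hvU : v ∈ U
      · refine .inr ⟨heq (hcancel ?_), .inr (.inl hvU)⟩
        rcases hcv with h | h
        · rw [h, if_pos hvU]
        · exact absurd h.1 (hU v hvU)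
      · by_cases h1 : c e₁ + c e₂ = 1
        · left
          refine good_of_star hs ?_
          have h3 : g e₃ = 0 := by
            rw [hg _ m3, if_neg]
            rintro ⟨hb, u, hu, heu⟩
            obtain ⟨w, hw, he⟩ := exists_ends_of_mem hP.cubic.1 (show e₃ ∈ G.star v by simp [hs])
            rw [mem_star_iff he] at heu
            rw [mem_bd_iff he] at hb
            have := (mem_pend.1 (hUC hu)).1
            rcases heu with rfl | rfl <;> tauto
          rw [hgF _ m1, hgF _ m2, h3]
          revert h1
          generalize c e₁ = x; generalize c e₂ = y; revert x y; decide
        · have h0 : c e₁ + c e₂ = 0 := (ZMod.two_eq_zero_or_one _).resolve_right h1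
          refine .inr ⟨heq (hcancel h0), .inr (.inr ⟨h2, ?_⟩)⟩
          rcases hcv with h | ⟨h, h'⟩
          · rw [if_neg hvU] at h; exact absurd h h1
          · refine ⟨h, ?_⟩
            rw [Finset.sum_ite, Finset.sum_const_zero, zero_add, Finset.sum_const, nsmul_one,
              Finset.filter_notMem_eq_sdiff] at h'
            rwa [← ZMod.natCast_eq_one_iff_odd]
  refine ⟨g, fun e he => ?_, fun v hv => (key v hv).imp_right And.left, ?_⟩
  · rw [hg _ (hbF e he)]; simp [he]
  · refine (Finset.card_le_card (fun v hv => ?_)).trans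
      ((Finset.card_union_le _ _).trans (Nat.add_le_add_right (Finset.card_union_le _ _) _))
    obtain ⟨hvC, hvg⟩ := Finset.mem_filter.1 hv
    have := ((key v hvC).resolve_left hvg).2
    simp only [Finset.mem_union, Finset.mem_filter]
    tauto

end EvenPiece

theorem sum_eq_sum_star (hl : G.Loopless) {C : Finset G.V} {S : Finset G.E} (hS : S ⊆ bd C)
    {M : Type*} [AddCommMonoid M] (c : G.E → M) :
    ∑ e ∈ S, c e = ∑ v ∈ C, ∑ e ∈ S ∩ G.star v, c e := by
  rw [sum_star hl, Finset.inter_eq_left.2 hS]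
  have : S ∩ inner C = ∅ := by
    ext e
    simp only [Finset.mem_inter, Finset.notMem_empty, iff_false]
    exact fun h => notMem_bd_of_mem_inner h.2 (hS h.1)
  simp [this]

namespace EvenPiece

variable {C : Finset G.V} {F : Finset G.E} (hP : EvenPiece C F)
include hP

/-- From any vertex one reaches a vertex covered by `F` along the edges outside `F`. -/
theorem exists_reach_covered (hV : ∃ v ∈ C, (F ∩ G.star v).card = 2) {v : G.V} (hv : v ∈ C) :
    ∃ w ∈ C, (F ∩ G.star w).card = 2 ∧ G.Reach (inner C \ F : Finset G.E) v w := by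
  by_contra! h
  obtain ⟨x, hxC, hx⟩ := hV
  have hsub : ∀ w ∈ comp ((inner C \ F : Finset G.E) : Set G.E) v, w ∈ C := by
    intro w hw
    rcases mem_comp.1 hw with _ | ⟨h1, e, he, h⟩
    · exact hv
    · exact ((mem_inner_iff h).1 (Finset.mem_sdiff.1 he).1).2
  have h2 := hP.cut _ hsub ⟨v, self_mem_comp⟩
    (fun h' => h x hxC hx (mem_comp.1 (by rw [h']; exact hxC)))
  obtain ⟨e, he⟩ := Finset.card_pos.1 (two_pos.trans_le h2)
  obtain ⟨hb, hi⟩ := Finset.mem_inter.1 he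
  have heF : e ∈ F := by
    by_contra heF
    exact notMem_of_mem_bd_comp hb (Finset.mem_coe.2 (Finset.mem_sdiff.2 ⟨hi, heF⟩))
  obtain ⟨u, hu, w, -, hends⟩ := mem_bd.1 hb
  rcases hP.deg u (hsub u hu) with h0 | h0
  · rw [Finset.card_eq_zero] at h0
    have : e ∈ F ∩ G.star u := Finset.mem_inter.2 ⟨heF, (mem_star_iff hends).2 (.inl rfl)⟩
    simp [h0] at this
  · exact h u (hsub u hu) h0 (mem_comp.1 hu)

/-- Colour `F` with `3, 4` and the remaining edges with `0, 1, 2`. -/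
theorem exists_coloring_three_four (hV : ∃ v ∈ C, (F ∩ G.star v).card = 2) {ρ : G.V → G.V}
    (hρ : ∀ v, G.Reach F v (ρ v)) (hρ' : ∀ v w, G.Reach F v w → ρ v = ρ w)
    {S : Finset G.E} (hS : S ⊆ bd C) :
    ∃ g : G.E → Fin 15, (∀ e ∈ bd C, g e = 0 ∨ g e = 1) ∧
      (∀ e ∈ bd C, e ∉ S → ∀ u ∈ C, e ∈ G.star u →
        g e = if (F ∩ G.star u).card = 2 then 1 else 0) ∧
      (∀ v ∈ C, Good g v ∨ Rep g v) ∧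
      5 * ((bad g C).card : ℤ) + ∑ e ∈ S, wt (g e) ≤
        2 * (C.filter fun v => (F ∩ G.star v).card = 2 ∧ (S ∩ G.star v).Nonempty).card -
        3 * (C.filter fun v => (F ∩ G.star v).card = 0 ∧ (S ∩ G.star v).Nonempty).card +
        5 * (C.filter fun v => (F ∩ G.star v).card = 2 ∧ ¬ (S ∩ G.star v).Nonempty ∧ ρ v = v ∧
          Odd (comp (F : Set G.E) v).card).card := by
  obtain ⟨c, hc⟩ := exists_chain_parity hP.cubic.1 F ρ hρ hρ' fun _ => 1
  obtain ⟨ρ', hρ1, -, hρ2⟩ := exists_representatives ((inner C \ F : Finset G.E) : Set G.E)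
    fun v => v ∈ C ∧ (F ∩ G.star v).card = 2
  obtain ⟨d, hd⟩ := exists_chain hP.cubic.1 (inner C \ F) ρ' hρ1 fun _ => 1
  let fail : G.V → Prop := fun v => ∑ e ∈ F ∩ G.star v, c e ≠ 1
  let g : G.E → Fin 15 := fun e => if e ∈ F then (if c e = 0 then 3 else 4) else
    if e ∈ inner C then (if d e = 0 then 1 else 2) else
    if ∃ u ∈ C, e ∈ G.star u ∧ (F ∩ G.star u).card = 2 ∧ ¬ (e ∈ S ∧ fail u) then 1 else 0
  have hgF : ∀ e ∈ F, g e = if c e = 0 then 3 else 4 := fun e he => if_pos he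
  have hgI : ∀ e ∈ inner C \ F, g e = if d e = 0 then 1 else 2 := by
    intro e he
    rw [Finset.mem_sdiff] at he
    simp only [g, if_neg he.2, if_pos he.1]
  have huniq : ∀ e ∈ bd C, ∀ u ∈ C, ∀ v ∈ C, e ∈ G.star u → e ∈ G.star v → u = v := by
    intro e he u hu v hv heu hev
    obtain ⟨x, hx, y, hy, h⟩ := mem_bd.1 he
    rw [mem_star_iff h] at heu hev
    have : ∀ w ∈ C, w = x ∨ w = y → w = x := by
      rintro w hw (h | rfl)
      · exact h
      · exact absurd hw hy
    rw [this u hu heu, this v hv hev]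
  have hgb : ∀ e ∈ bd C, ∀ u ∈ C, e ∈ G.star u →
      g e = if (F ∩ G.star u).card = 2 ∧ ¬ (e ∈ S ∧ fail u) then 1 else 0 := by
    intro e he u hu heu
    have h1 : e ∉ inner C := fun h => notMem_bd_of_mem_inner h he
    have h2 : e ∉ F := fun h => h1 (hP.subset h)
    simp only [g, if_neg h1, if_neg h2]
    refine if_congr ⟨?_, fun h => ⟨u, hu, heu, h⟩⟩ rfl rfl
    rintro ⟨w, hw, hew, h⟩
    rwa [huniq e he u hu w hw heu hew]
  have hmiss : ∀ v ∈ C, (F ∩ G.star v).card = 0 → Good g v := by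
    intro v hv h0
    obtain ⟨e₁, e₂, e₃, h12, h13, h23, hs, m1, m2, m3, -⟩ := hP.exists_star_eq_of_card_zero hv h0
    have hdv := hd v fun w hw => by
      obtain ⟨x, hxC, hx, hr⟩ := hP.exists_reach_covered hV hv
      have h1 := hρ1 w
      rw [hw] at h1
      have := (hρ2 w x (h1.trans hr) ⟨hxC, hx⟩).2
      rw [hw] at this
      omega
    have hI : (inner C \ F) ∩ G.star v = {e₁, e₂} := by
      have h3 : e₃ ∉ inner C := fun h => notMem_bd_of_mem_inner h m3
      ext e
      simp only [hs, Finset.mem_inter, Finset.mem_insert, Finset.mem_singleton]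
      constructor
      · rintro ⟨h, rfl | rfl | rfl⟩
        · exact .inl rfl
        · exact .inr rfl
        · exact absurd (Finset.mem_sdiff.1 h).1 h3
      · rintro (rfl | rfl)
        · exact ⟨m1, by tauto⟩
        · exact ⟨m2, by tauto⟩
    rw [hI, Finset.sum_pair h12] at hdv
    refine good_of_star hs ?_
    have h3 : g e₃ = 0 := by rw [hgb _ m3 v hv (by simp [hs]), h0]; simp
    rw [hgI _ m1, hgI _ m2, h3]
    revert hdv
    generalize d e₁ = x; generalize d e₂ = y; revert x y; decide
  have hcov : ∀ v ∈ C, (F ∩ G.star v).card = 2 → (¬ fail v → Good g v) ∧ (fail v → Rep g v) := by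
    intro v hv h2
    obtain ⟨e₁, e₂, e₃, h12, h13, h23, hs, hF, m1, m2, m3⟩ :=
      hP.cubic.exists_star_eq_of_card_two h2
    simp only [fail, hF, Finset.sum_pair h12, ne_eq, not_not]
    constructor
    · intro h
      refine good_of_star hs ?_
      have h3 : g e₃ = 1 ∨ g e₃ = 2 := by
        rcases star_subset hP.cubic.1 hv (show e₃ ∈ G.star v by simp [hs]) with hi | hb
        · rw [hgI _ (Finset.mem_sdiff.2 ⟨hi, m3⟩)]
          split_ifs <;> simp
        · left
          rw [hgb _ hb v hv (by simp [hs]), if_pos]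
          rw [h2]
          simp [fail, hF, Finset.sum_pair h12, h]
      rw [hgF _ m1, hgF _ m2]
      revert h h3
      generalize c e₁ = x; generalize c e₂ = y; generalize g e₃ = z; revert x y z; decide
    · intro h
      refine ⟨e₁, by simp [hs], e₂, by simp [hs], h12, ?_⟩
      rw [hgF _ m1, hgF _ m2]
      revert h
      generalize c e₁ = x; generalize c e₂ = y; revert x y; decide
  have hfail : ∀ v, fail v → ρ v = v ∧ Odd (comp (F : Set G.E) v).card := by
    intro v hv
    refine ((hc v).resolve_left hv).imp_right fun h => ?_
    rwa [Finset.sum_const, nsmul_one, ZMod.natCast_eq_one_iff_odd] at h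
  refine ⟨g, ?_, ?_, ?_, ?_⟩
  · intro e he
    obtain ⟨x, hx, y, hy, h⟩ := mem_bd.1 he
    rw [hgb e he x hx ((mem_star_iff h).2 (.inl rfl))]
    split_ifs <;> simp
  · intro e he heS u hu heu
    rw [hgb e he u hu heu]; simp [heS]
  · intro v hv
    rcases hP.deg v hv with h0 | h2
    · exact .inl (hmiss v hv h0)
    · by_cases hf : fail v
      · exact .inr ((hcov v hv h2).2 hf)
      · exact .inl ((hcov v hv h2).1 hf)
  · rw [sum_eq_sum_star hP.cubic.1 hS, bad]
    simp only [Finset.card_filter, Nat.cast_sum, Finset.mul_sum, ← Finset.sum_add_distrib,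
      ← Finset.sum_sub_distrib]
    refine Finset.sum_le_sum fun v hv => ?_
    have hSv : ¬ (S ∩ G.star v).Nonempty → ∑ e ∈ S ∩ G.star v, wt (g e) = 0 := by
      intro h
      rw [Finset.not_nonempty_iff_eq_empty.1 h, Finset.sum_empty]
    have hSv' : (S ∩ G.star v).Nonempty →
        ∃ e ∈ bd C, e ∈ S ∧ e ∈ G.star v ∧ ∑ e ∈ S ∩ G.star v, wt (g e) = wt (g e) := by
      intro h
      have h1 : (S ∩ G.star v).card = 1 := by
        have h2 := Finset.card_le_card (Finset.inter_subset_inter_right (u := G.star v) hS)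
        have h3 := hP.pend_le v hv
        rw [Finset.inter_comm] at h3
        have := Finset.card_pos.2 h
        omega
      obtain ⟨e, he⟩ := Finset.card_eq_one.1 h1
      have : e ∈ S ∩ G.star v := by simp [he]
      rw [Finset.mem_inter] at this
      exact ⟨e, hS this.1, this.1, this.2, by rw [he, Finset.sum_singleton]⟩
    rcases hP.deg v hv with h0 | h2
    · have hg := hmiss v hv h0
      by_cases hne : (S ∩ G.star v).Nonempty
      · obtain ⟨e, heb, heS, hev, hsum⟩ := hSv' hne
        rw [hsum, hgb e heb v hv hev]
        simp [h0, hg, hne, wt]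
      · rw [hSv hne]
        simp [h0, hg, hne]
    · by_cases hne : (S ∩ G.star v).Nonempty
      · obtain ⟨e, heb, heS, hev, hsum⟩ := hSv' hne
        rw [hsum, hgb e heb v hv hev]
        by_cases hf : fail v
        · have : ¬ (0 : Fin 15) ∈ ({1, 2} : Finset (Fin 15)) := by decide
          by_cases hg : Good g v <;> simp [h2, hne, hg, hf, heS, wt]
        · have := (hcov v hv h2).1 hf
          simp [h2, hne, this, hf, wt]
      · rw [hSv hne]
        by_cases hf : fail v
        · have := hfail v hf
          by_cases hg : Good g v <;> simp [h2, hne, hg, this]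
        · have := (hcov v hv h2).1 hf
          simp only [h2, hne, this]
          by_cases ho : ρ v = v ∧ Odd (comp (F : Set G.E) v).card <;> simp [ho]

end EvenPiece

/-- The colours used on bridges: those of the bridges and of one of the end-blocks. -/
def bridgeColors : Finset (Fin 15) := {0, 1, 2, 5, 10}

/-- A colouring near `C` extending a colour of the boundary edge `e₀` which pays for the
edges of `S`. -/
def CoreColoring (C : Finset G.V) (e₀ : G.E) (S : Finset G.E) (κ : Fin 15) : Prop :=
  ∃ g : G.E → Fin 15, g e₀ = κ ∧ (∀ e ∈ bd C, g e ∈ bridgeColors) ∧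
    (∀ v ∈ C, Good g v ∨ Rep g v) ∧ 5 * ((bad g C).card : ℤ) + ∑ e ∈ S, wt (g e) ≤ C.card

namespace EvenPiece

variable {C : Finset G.V} {F : Finset G.E} (hP : EvenPiece C F)
include hP

theorem two_le_card_comp_sdiff_pend (hV : ∃ v ∈ C, v ∉ pend C) {v : G.V} (hv : v ∈ C)
    (h2 : (F ∩ G.star v).card = 2) : 2 ≤ (comp (F : Set G.E) v \ pend C).card := by
  set K := comp (F : Set G.E) v with hK
  have hKC : K ⊆ C := hP.comp_subset hv
  have hcov : ∀ w ∈ K, (F ∩ G.star w).card = 2 := fun w hw => hP.card_eq_two_of_mem_comp hv h2 hw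
  have h3 := sum_card_star hP.cubic.1 K (inner C \ F)
  have h4 : ∑ w ∈ K, ((inner C \ F) ∩ G.star w).card = (K \ pend C).card := by
    rw [← Finset.filter_notMem_eq_sdiff (s := K), Finset.card_filter]
    refine Finset.sum_congr rfl fun w hw => ?_
    have h5 := card_inner_inter_star hP.cubic (hKC hw)
    have h6 : ((inner C \ F) ∩ G.star w).card + (F ∩ G.star w).card =
        (inner C ∩ G.star w).card := by
      rw [← Finset.card_sdiff_add_card_inter (inner C ∩ G.star w) F]
      congr 2
      · ext e
        simp only [Finset.mem_inter, Finset.mem_sdiff]; tauto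
      · ext e
        have := @hP.subset e
        simp only [Finset.mem_inter]; tauto
    have h7 := hP.pend_le w (hKC hw)
    have h8 := hcov w hw
    by_cases hp : w ∈ pend C
    · have := Finset.card_pos.2 (mem_pend.1 hp).2
      rw [if_neg (not_not.2 hp)]; omega
    · have : G.star w ∩ bd C = ∅ := by
        by_contra h
        exact hp (mem_pend.2 ⟨hKC hw, Finset.nonempty_iff_ne_empty.2 h⟩)
      rw [this, Finset.card_empty] at h5
      rw [if_pos hp]; omega
  by_cases hKe : K = C
  · have h5 : (inner C \ F) ∩ bd K = ∅ := by
      ext e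
      simp only [Finset.mem_inter, Finset.mem_sdiff, Finset.notMem_empty, iff_false, hKe]
      exact fun h => notMem_bd_of_mem_inner h.1.1 h.2
    have h6 : 0 < (K \ pend C).card := by
      obtain ⟨x, hx, hxp⟩ := hV
      exact Finset.card_pos.2 ⟨x, Finset.mem_sdiff.2 ⟨hKe ▸ hx, hxp⟩⟩
    rw [h5, Finset.card_empty] at h3
    omega
  · have h5 := hP.cut K hKC ⟨v, self_mem_comp⟩ hKe
    have h6 : bd K ∩ inner C ⊆ (inner C \ F) ∩ bd K := by
      intro e he
      rw [Finset.mem_inter] at he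
      exact Finset.mem_inter.2 ⟨Finset.mem_sdiff.2 ⟨he.2, notMem_of_mem_bd_comp he.1⟩, he.1⟩
    have := Finset.card_le_card h6
    omega

theorem five_le_of_odd_sdiff {v : G.V} {U : Finset G.V} (hv : v ∈ C)
    (h2 : (F ∩ G.star v).card = 2) (hodd : Odd (comp (F : Set G.E) v \ U).card) :
    5 ≤ (comp (F : Set G.E) v).card + 3 * (U ∩ comp (F : Set G.E) v).card := by
  have h3 := hP.two_le_card_comp h2
  by_cases h : U ∩ comp (F : Set G.E) v = ∅
  · rw [Finset.sdiff_eq_self_of_disjoint (Finset.disjoint_iff_inter_eq_empty.2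
      (by rwa [Finset.inter_comm]))] at hodd
    have := hP.five_le_card_comp hv h2 hodd
    omega
  · have := Finset.card_pos.2 (Finset.nonempty_iff_ne_empty.2 h)
    omega

theorem card_inter_star_le {S : Finset G.E} (hS : S ⊆ bd C) {v : G.V} (hv : v ∈ C) :
    (S ∩ G.star v).card ≤ 1 := by
  have h2 := Finset.card_le_card (Finset.inter_subset_inter_right (u := G.star v) hS)
  have h3 := hP.pend_le v hv
  rw [Finset.inter_comm] at h3
  omega

theorem card_eq_card_add_card {S : Finset G.E} (hS : S ⊆ bd C) : S.card =
    (C.filter fun v => (F ∩ G.star v).card = 2 ∧ (S ∩ G.star v).Nonempty).card +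
    (C.filter fun v => (F ∩ G.star v).card = 0 ∧ (S ∩ G.star v).Nonempty).card := by
  have h := sum_eq_sum_star hP.cubic.1 hS (fun _ => 1)
  rw [← Finset.card_eq_sum_ones] at h
  rw [h, Finset.card_filter, Finset.card_filter, ← Finset.sum_add_distrib]
  refine Finset.sum_congr rfl fun v hv => ?_
  have h1 := hP.card_inter_star_le hS hv
  rw [← Finset.card_eq_sum_ones]
  by_cases hne : (S ∩ G.star v).Nonempty
  · have := Finset.card_pos.2 hne
    rcases hP.deg v hv with h0 | h0 <;> simp [h0, hne] <;> omega
  · rcases hP.deg v hv with h0 | h0 <;>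
      simp [h0, Finset.not_nonempty_iff_eq_empty.1 hne]

/-- The version of `exists_coloring_five_ten` where at most one boundary edge is coloured `1`. -/
theorem coreColoring_of_bound {ρ : G.V → G.V} (hρ : ∀ v, G.Reach F v (ρ v))
    (hρ' : ∀ v w, G.Reach F v w → ρ v = ρ w) {S : Finset G.E} (hS : S ⊆ bd C) {e₀ : G.E}
    (he₀ : e₀ ∈ bd C) (heS : e₀ ∉ S) {u₀ : G.V} (hu₀ : u₀ ∈ C) (heu : e₀ ∈ G.star u₀)
    {κ : Fin 15} {U : Finset G.V} (hU : U = ∅ ∧ κ = 0 ∨ U = {u₀} ∧ κ = 1 ∧ ρ u₀ ≠ u₀)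
    (hb : 5 * (C.filter fun v => (F ∩ G.star v).card = 0).card + 5 * U.card +
        5 * (C.filter fun v => (F ∩ G.star v).card = 2 ∧ ρ v = v ∧
          Odd (comp (F : Set G.E) v \ U).card).card ≤ C.card + 3 * S.card) :
    CoreColoring C e₀ S κ := by
  have hUu : U ⊆ {u₀} := by rcases hU with h | h <;> simp [h.1]
  have hp : u₀ ∈ pend C := mem_pend.2 ⟨hu₀, e₀, Finset.mem_inter.2 ⟨heu, he₀⟩⟩
  obtain ⟨g, h1, h2, h3⟩ := hP.exists_coloring_five_ten hρ hρ' U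
    (fun u hu => by
      rcases hU with h | h
      · simp [h.1] at hu
      · rw [Finset.mem_singleton.1 (hUu hu)]; exact h.2.2)
    (fun u hu => by rw [Finset.mem_singleton.1 (hUu hu)]; exact hp)
  refine ⟨g, ?_, ?_, h2, ?_⟩
  · rw [h1 _ he₀]
    rcases hU with ⟨rfl, rfl⟩ | ⟨rfl, rfl, -⟩
    · simp
    · simp [heu]
  · intro e he
    rw [h1 e he]; split_ifs <;> decide
  · have h4 : ∀ e ∈ S, wt (g e) = -3 := by
      intro e he
      have h5 : ¬ ∃ u ∈ U, e ∈ G.star u := by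
        rintro ⟨u, hu, heu'⟩
        rw [Finset.mem_singleton.1 (hUu hu)] at heu'
        refine heS ?_
        rwa [Finset.card_le_one.1 (hP.pend_le u₀ hu₀) e₀ (Finset.mem_inter.2 ⟨heu, he₀⟩) e
          (Finset.mem_inter.2 ⟨heu', hS he⟩)]
      rw [h1 e (hS he), if_neg h5]; decide
    rw [Finset.sum_congr rfl h4, Finset.sum_const, nsmul_eq_mul]
    have h6 : ((bad g C).card : ℤ) ≤ _ := Int.ofNat_le.2 h3
    push_cast at h6
    omega

theorem coreColoring_of_exists (hV : ∃ v ∈ C, v ∉ pend C) {S : Finset G.E} (hS : S ⊆ bd C)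
    {e₀ : G.E} (he₀ : e₀ ∈ bd C) (heS : e₀ ∉ S) {u₀ : G.V} (hu₀ : u₀ ∈ C) (heu : e₀ ∈ G.star u₀)
    {κ : Fin 15} (hκ : (F ∩ G.star u₀).card = 0 ∧ κ = 0 ∨ (F ∩ G.star u₀).card = 2 ∧ κ = 1) :
    CoreColoring C e₀ S κ := by
  let A : Set G.E := F
  let W : G.V → Prop := fun v => (S ∩ G.star v).Nonempty
  let P := C.filter fun v => (F ∩ G.star v).card = 0
  let QS := C.filter fun v => (F ∩ G.star v).card = 2 ∧ ∃ w ∈ comp A v, W w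
  let Q₀ := C.filter fun v => (F ∩ G.star v).card = 2 ∧ ¬ ∃ w ∈ comp A v, W w
  let SF := C.filter fun v => (F ∩ G.star v).card = 2 ∧ W v
  have hcard : P.card + QS.card + Q₀.card = C.card := by
    simp only [P, QS, Q₀, Finset.card_filter, ← Finset.sum_add_distrib]
    rw [Finset.card_eq_sum_ones]
    refine Finset.sum_congr rfl fun v hv => ?_
    rcases hP.deg v hv with h0 | h0 <;> by_cases h1 : ∃ w ∈ comp A v, W w <;> simp [h0, h1]
  have hWp : ∀ v ∈ C, W v → v ∈ pend C := by
    rintro v hv ⟨e, he⟩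
    rw [Finset.mem_inter] at he
    exact mem_pend.2 ⟨hv, e, Finset.mem_inter.2 ⟨he.2, hS he.1⟩⟩
  have hQ₀ : ∀ v ∈ Q₀, comp A v ⊆ Q₀ := by
    intro v hv w hw
    obtain ⟨hvC, h2, hno⟩ := Finset.mem_filter.1 hv
    refine Finset.mem_filter.2 ⟨hP.comp_subset hvC hw, hP.card_eq_two_of_mem_comp hvC h2 hw, ?_⟩
    rwa [← comp_eq (mem_comp.1 hw)]
  have hSc := hP.card_eq_card_add_card hS
  by_cases hB : 2 * SF.card ≤ QS.card + P.card +
      3 * (C.filter fun v => (F ∩ G.star v).card = 0 ∧ W v).card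
  · obtain ⟨ρ, hρ, hρ', hpref⟩ := exists_representatives A W
    have hcov : ∃ v ∈ C, (F ∩ G.star v).card = 2 := by
      obtain ⟨v, hv, hvp⟩ := hV
      exact ⟨v, hv, hP.deg_two v hv hvp⟩
    obtain ⟨g, h1, h2, h3, h4⟩ := hP.exists_coloring_three_four hcov hρ hρ' hS
    refine ⟨g, ?_, fun e he => ?_, h3, ?_⟩
    · rw [h2 e₀ he₀ heS u₀ hu₀ heu]
      rcases hκ with ⟨h, rfl⟩ | ⟨h, rfl⟩ <;> simp [h]
    · rcases h1 e he with h | h <;> rw [h] <;> decide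
    · set R := C.filter fun v => (F ∩ G.star v).card = 2 ∧ ¬ (S ∩ G.star v).Nonempty ∧ ρ v = v ∧
          Odd (comp (F : Set G.E) v).card
      have hR : ∀ r ∈ R, r ∈ C ∧ (F ∩ G.star r).card = 2 ∧ ¬ W r ∧ ρ r = r ∧
        Odd (comp (F : Set G.E) r).card := fun r hr => Finset.mem_filter.1 hr
      have h5 := five_mul_card_le (A := A) (Q := Q₀) (U := ∅) hρ' (R := R)
        (fun r hr => (hR r hr).2.2.2.1)
        (fun r hr => by
          obtain ⟨hrC, hr2, hrW, hrr, -⟩ := hR r hr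
          refine hQ₀ r (Finset.mem_filter.2 ⟨hrC, hr2, ?_⟩)
          rintro ⟨w, hw, hWw⟩
          exact hrW (hrr ▸ hpref r w (mem_comp.1 hw) hWw))
        (fun r hr => by
          have := hP.five_le_card_comp (hR r hr).1 (hR r hr).2.1 (hR r hr).2.2.2.2
          exact this.trans (Nat.le_add_right _ _))
      rw [Finset.card_empty] at h5
      simp only [SF, W] at hB
      omega
  · let U : Finset G.V := if κ = 0 then ∅ else {u₀}
    have hU : U ⊆ {u₀} := by simp only [U]; split_ifs <;> simp
    obtain ⟨ρ, hρ, hρ', hpref⟩ := exists_representatives A fun v => ¬ W v ∧ v ∉ U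
    have hp : u₀ ∈ pend C := mem_pend.2 ⟨hu₀, e₀, Finset.mem_inter.2 ⟨heu, he₀⟩⟩
    have hρv : ∀ v ∈ C, (F ∩ G.star v).card = 2 → ¬ W (ρ v) ∧ ρ v ∉ U := by
      intro v hv h2
      have h3 := hP.two_le_card_comp_sdiff_pend hV hv h2
      obtain ⟨w, hw⟩ := Finset.card_pos.1 (two_pos.trans_le h3)
      rw [Finset.mem_sdiff] at hw
      refine hpref v w (mem_comp.1 hw.1) ⟨fun h => hw.2 (hWp w (hP.comp_subset hv hw.1) h), ?_⟩
      exact fun h => hw.2 (Finset.mem_singleton.1 (hU h) ▸ hp)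
    refine hP.coreColoring_of_bound hρ hρ' hS he₀ heS hu₀ heu (U := U) ?_ ?_
    · rcases hκ with ⟨-, rfl⟩ | ⟨h, rfl⟩
      · simp [U]
      · have := (hρv u₀ hu₀ h).2
        simp [U] at this
        simp [U, this]
    set R := C.filter fun v => (F ∩ G.star v).card = 2 ∧ ρ v = v ∧
          Odd (comp (F : Set G.E) v \ U).card
    have hR : ∀ r ∈ R, r ∈ C ∧ (F ∩ G.star r).card = 2 ∧ ρ r = r ∧
        Odd (comp (F : Set G.E) r \ U).card := fun r hr => Finset.mem_filter.1 hr
    have h5 := five_mul_card_le (A := A) (Q := Q₀) (U := U) hρ' (R := R ∩ Q₀)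
      (fun r hr => (hR r (Finset.mem_inter.1 hr).1).2.2.1)
      (fun r hr => hQ₀ r (Finset.mem_inter.1 hr).2)
      (fun r hr => by
        have := hR r (Finset.mem_inter.1 hr).1
        exact hP.five_le_of_odd_sdiff this.1 this.2.1 this.2.2.2)
    have h6 : SF.card + (R ∩ QS).card + 1 ≤ QS.card := by
      obtain ⟨v, hv⟩ := Finset.card_pos.1 (show 0 < SF.card by omega)
      obtain ⟨hvC, h2, hW⟩ := Finset.mem_filter.1 hv
      obtain ⟨x, hx, y, hy, hxy⟩ :=
        Finset.one_lt_card.1 (hP.two_le_card_comp_sdiff_pend hV hvC h2)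
      have hQS : ∀ w ∈ comp A v, w ∈ QS := fun w hw => Finset.mem_filter.2
        ⟨hP.comp_subset hvC hw, hP.card_eq_two_of_mem_comp hvC h2 hw, v,
          mem_comp.2 (mem_comp.1 hw).symm, hW⟩
      obtain ⟨z, hz, hzR⟩ : ∃ z ∈ comp A v \ pend C, z ∉ R := by
        by_contra! h
        refine hxy ?_
        rw [← (hR x (h x hx)).2.2.1, ← (hR y (h y hy)).2.2.1]
        rw [Finset.mem_sdiff, mem_comp] at hx hy
        rw [← hρ' v x hx.1, ← hρ' v y hy.1]
      rw [Finset.mem_sdiff] at hz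
      have hzW : z ∉ SF := fun h =>
        hz.2 (hWp z (hP.comp_subset hvC hz.1) (Finset.mem_filter.1 h).2.2)
      have hd : Disjoint SF (R ∩ QS) := by
        rw [Finset.disjoint_left]
        intro w hw hw'
        obtain ⟨hwC, hw2, hww, -⟩ := hR w (Finset.mem_inter.1 hw').1
        exact (hρv w hwC hw2).1 (hww.symm ▸ (Finset.mem_filter.1 hw).2.2)
      have hzn : z ∉ SF ∪ (R ∩ QS) := by
        rw [Finset.mem_union, Finset.mem_inter]; tauto
      rw [← Finset.card_union_of_disjoint hd, ← Finset.card_insert_of_notMem hzn]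
      refine Finset.card_le_card (Finset.insert_subset (hQS z hz.1) (Finset.union_subset ?_
        Finset.inter_subset_right))
      intro w hw
      obtain ⟨hwC, hw2, hwW⟩ := Finset.mem_filter.1 hw
      exact Finset.mem_filter.2 ⟨hwC, hw2, w, self_mem_comp, hwW⟩
    have h7 : R.card ≤ (R ∩ Q₀).card + (R ∩ QS).card := by
      refine (Finset.card_le_card fun r hr => ?_).trans (Finset.card_union_le _ _)
      obtain ⟨hrC, hr2, -⟩ := hR r hr
      simp only [Finset.mem_union, Finset.mem_inter, Finset.mem_filter, QS, Q₀, hr, hrC, hr2,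
        true_and]
      tauto
    have h8 : U.card ≤ 1 := by simpa using Finset.card_le_card hU
    simp only [SF, W, P] at hB h6 hcard ⊢
    omega

end EvenPiece

namespace EvenPiece

variable {C : Finset G.V}

/-- If every vertex of `C` has a boundary edge then the inner edges form a cycle. -/
theorem comp_inner_eq {F : Finset G.E} (hP : EvenPiece C F) (hF : F = inner C) {v : G.V}
    (hv : v ∈ C) : comp (F : Set G.E) v = C := by
  by_contra h
  have h2 := hP.cut _ (hP.comp_subset hv) ⟨v, self_mem_comp⟩ h
  obtain ⟨e, he⟩ := Finset.card_pos.1 (two_pos.trans_le h2)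
  rw [Finset.mem_inter] at he
  exact notMem_of_mem_bd_comp he.1 (by rw [hF]; exact he.2)

theorem coreColoring_of_forall {F : Finset G.E} (hP : EvenPiece C F) (hF : F = inner C)
    (h2 : ∀ v ∈ C, (F ∩ G.star v).card = 2)
    {S : Finset G.E} (hS : S ⊆ bd C) {e₀ : G.E} (he₀ : e₀ ∈ bd C) (heS : e₀ ∉ S) {κ : Fin 15}
    (hκ : κ = 0 ∨ κ = 1) : CoreColoring C e₀ S κ := by
  obtain ⟨u₀, hu₀, w₀, -, hends⟩ := mem_bd.1 he₀
  have heu : e₀ ∈ G.star u₀ := (mem_star_iff hends).2 (.inl rfl)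
  have hcomp : ∀ v ∈ C, comp (F : Set G.E) v = C := fun v hv => hP.comp_inner_eq hF hv
  have hSc := hP.card_eq_card_add_card hS
  have hP0 : (C.filter fun v => (F ∩ G.star v).card = 0) = ∅ :=
    Finset.filter_eq_empty_iff.2 fun v hv h => by have := h2 v hv; omega
  have hP1 : (C.filter fun v => (F ∩ G.star v).card = 0 ∧ (S ∩ G.star v).Nonempty) = ∅ :=
    Finset.filter_eq_empty_iff.2 fun v hv h => by have := h2 v hv; omega
  rw [hP1] at hSc
  rcases hκ with rfl | rfl
  · obtain ⟨ρ, hρ, hρ', -⟩ := exists_representatives (F : Set G.E) fun _ => True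
    refine hP.coreColoring_of_bound hρ hρ' hS he₀ heS hu₀ heu (.inl ⟨rfl, rfl⟩) ?_
    set R := C.filter fun v => (F ∩ G.star v).card = 2 ∧ ρ v = v ∧
          Odd (comp (F : Set G.E) v \ ∅).card
    have hR : ∀ r ∈ R, r ∈ C ∧ (F ∩ G.star r).card = 2 ∧ ρ r = r ∧
        Odd (comp (F : Set G.E) r \ ∅).card := fun r hr => Finset.mem_filter.1 hr
    have h5 := five_mul_card_le (Q := C) (U := ∅) hρ' (R := R) (fun r hr => (hR r hr).2.2.1)
      (fun r hr => hP.comp_subset (hR r hr).1)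
      (fun r hr => hP.five_le_of_odd_sdiff (hR r hr).1 (hR r hr).2.1 (hR r hr).2.2.2)
    rw [hP0]
    simp only [Finset.card_empty] at h5 ⊢
    omega
  · by_cases hB : 2 * S.card ≤ C.card
    · obtain ⟨ρ, hρ, hρ', hpref⟩ := exists_representatives (F : Set G.E)
        fun v => (S ∩ G.star v).Nonempty
      obtain ⟨g, h1, h3, h4, h5⟩ :=
        hP.exists_coloring_three_four ⟨u₀, hu₀, h2 u₀ hu₀⟩ hρ hρ' hS
      refine ⟨g, ?_, fun e he => ?_, h4, ?_⟩
      · rw [h3 e₀ he₀ heS u₀ hu₀ heu, if_pos (h2 u₀ hu₀)]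
      · rcases h1 e he with h | h <;> rw [h] <;> decide
      · set R := C.filter fun v => (F ∩ G.star v).card = 2 ∧ ¬ (S ∩ G.star v).Nonempty ∧ ρ v = v ∧
          Odd (comp (F : Set G.E) v).card
        have hR : ∀ r ∈ R, r ∈ C ∧ (F ∩ G.star r).card = 2 ∧ ¬ (S ∩ G.star r).Nonempty ∧ ρ r = r ∧
          Odd (comp (F : Set G.E) r).card := fun r hr => Finset.mem_filter.1 hr
        have h6 := five_mul_card_le (Q := C) (U := ∅) hρ' (R := R) (fun r hr => (hR r hr).2.2.2.1)
          (fun r hr => hP.comp_subset (hR r hr).1)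
          (fun r hr => (hP.five_le_card_comp (hR r hr).1 (hR r hr).2.1 (hR r hr).2.2.2.2).trans
            (Nat.le_add_right _ _))
        have h7 : S.card ≠ 0 → R.card = 0 := by
          intro h
          by_contra hR0
          obtain ⟨r, hr⟩ := Finset.card_pos.1 (Nat.pos_of_ne_zero hR0)
          obtain ⟨e, he⟩ := Finset.card_pos.1 (Nat.pos_of_ne_zero h)
          obtain ⟨u, hu, w, -, hw⟩ := mem_bd.1 (hS he)
          obtain ⟨hrC, -, hrS, hrr, -⟩ := hR r hr
          refine hrS (hrr ▸ hpref r u (mem_comp.1 (by rw [hcomp r hrC]; exact hu)) ⟨e, ?_⟩)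
          exact Finset.mem_inter.2 ⟨he, (mem_star_iff hw).2 (.inl rfl)⟩
        rw [hP1] at h5
        simp only [Finset.card_empty] at h5 h6 hSc
        omega
    · obtain ⟨ρ, hρ, hρ', hpref⟩ := exists_representatives (F : Set G.E) fun v => v ≠ u₀
      have h3 := hP.two_le_card_comp (h2 u₀ hu₀)
      rw [hcomp u₀ hu₀] at h3
      have hρu : ρ u₀ ≠ u₀ := by
        obtain ⟨w, hw, hne⟩ := Finset.exists_mem_ne (show 1 < C.card by omega) u₀
        exact hpref u₀ w (mem_comp.1 (by rwa [hcomp u₀ hu₀])) hne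
      refine hP.coreColoring_of_bound hρ hρ' hS he₀ heS hu₀ heu (.inr ⟨rfl, rfl, hρu⟩) ?_
      set R := C.filter fun v => (F ∩ G.star v).card = 2 ∧ ρ v = v ∧
          Odd (comp (F : Set G.E) v \ {u₀}).card
      have hR : ∀ r ∈ R, r ∈ C ∧ (F ∩ G.star r).card = 2 ∧ ρ r = r ∧
        Odd (comp (F : Set G.E) r \ {u₀}).card := fun r hr => Finset.mem_filter.1 hr
      have h4 : R.card ≤ 1 := by
        refine Finset.card_le_one.2 fun r hr r' hr' => ?_
        rw [← (hR r hr).2.2.1, ← (hR r' hr').2.2.1]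
        exact hρ' _ _ (mem_comp.1 (by rw [hcomp r (hR r hr).1]; exact (hR r' hr').1))
      have h5 : R.card = 0 ∨ Odd (C.card - 1) := by
        by_cases h : R.card = 0
        · exact .inl h
        · obtain ⟨r, hr⟩ := Finset.card_pos.1 (Nat.pos_of_ne_zero h)
          have := (hR r hr).2.2.2
          rw [hcomp r (hR r hr).1, Finset.card_sdiff_of_subset (by simpa using hu₀),
            Finset.card_singleton] at this
          exact .inr this
      have h6 : S.card + 1 ≤ C.card := by
        have h7 : (insert e₀ S).card ≤ ∑ v ∈ C, 1 := by
          rw [Finset.card_eq_sum_ones, sum_eq_sum_star hP.cubic.1 (Finset.insert_subset he₀ hS)]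
          refine Finset.sum_le_sum fun v hv => ?_
          rw [← Finset.card_eq_sum_ones]
          exact hP.card_inter_star_le (Finset.insert_subset he₀ hS) hv
        rwa [Finset.card_insert_of_notMem heS, ← Finset.card_eq_sum_ones] at h7
      rw [hP0, Finset.card_empty, Finset.card_singleton]
      rcases h5 with h | ⟨k, hk⟩ <;> omega

end EvenPiece

section

variable {C : Finset G.V} (hG : G.Cubic) (hU : ∀ v ∈ C, (G.star v ∩ bd C).card ≤ 1)
  (h2 : ∀ D ⊆ C, D.Nonempty → D ≠ C → 2 ≤ (bd D ∩ inner C).card)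
  (hT : ∀ x ∈ C, ∀ y ∈ C, ∀ z ∈ C, ∀ e₁ e₂ e₃, ¬ G.IsTriangle e₁ e₂ e₃ x y z)

include hG hU h2 hT in
theorem coreColoring {S : Finset G.E} (hS : S ⊆ bd C) {e₀ : G.E} (he₀ : e₀ ∈ bd C) (heS : e₀ ∉ S)
    {κ : Fin 15} (hκ : κ = 0 ∨ κ = 1) : CoreColoring C e₀ S κ := by
  by_cases hV : ∃ v ∈ C, v ∉ pend C
  · obtain ⟨u₀, hu₀, w₀, -, hends⟩ := mem_bd.1 he₀
    have heu : e₀ ∈ G.star u₀ := (mem_star_iff hends).2 (.inl rfl)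
    have hp : u₀ ∈ pend C := mem_pend.2 ⟨hu₀, e₀, Finset.mem_inter.2 ⟨heu, he₀⟩⟩
    obtain ⟨F, hF, hd2, hd, hi⟩ := exists_even_subgraph hG hU h2 (if κ = 0 then 0 else 2)
      (by split_ifs <;> simp) u₀
    have hP : EvenPiece C F := ⟨hG, hU, h2, hT, hF, hd, hd2⟩
    refine hP.coreColoring_of_exists hV hS he₀ heS hu₀ heu ?_
    rw [hi hp]
    rcases hκ with rfl | rfl <;> simp
  · push Not at hV
    have h3 : ∀ v ∈ C, (inner C ∩ G.star v).card = 2 := by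
      intro v hv
      have h4 := card_inner_inter_star hG hv
      have h5 := Finset.card_pos.2 (mem_pend.1 (hV v hv)).2
      have h6 := hU v hv
      omega
    have hP : EvenPiece C (inner C) :=
      ⟨hG, hU, h2, hT, subset_rfl, fun v hv => .inr (h3 v hv), fun v hv _ => h3 v hv⟩
    exact hP.coreColoring_of_forall rfl h3 hS he₀ heS hκ

include hG h2 hT in
/-- A piece without boundary. -/
theorem exists_coloring_of_bd_eq_empty (h0 : bd C = ∅) : ∃ g : G.E → Fin 15,
    (∀ v ∈ C, Good g v ∨ Rep g v) ∧ 5 * (bad g C).card ≤ C.card := by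
  rcases C.eq_empty_or_nonempty with rfl | ⟨u₀, hu₀⟩
  · exact ⟨fun _ => 0, by simp, by simp [bad]⟩
  have hU : ∀ v ∈ C, (G.star v ∩ bd C).card ≤ 1 := by simp [h0]
  obtain ⟨F, hF, hd2, hd, -⟩ := exists_even_subgraph hG hU h2 0 (.inl rfl) u₀
  have hP : EvenPiece C F := ⟨hG, hU, h2, hT, hF, hd, hd2⟩
  have h3 : (C.filter fun v => (F ∩ G.star v).card = 0) = ∅ :=
    Finset.filter_eq_empty_iff.2 fun v hv h => by
      have := hd2 v hv (by simp [mem_pend, h0]); omega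
  obtain ⟨ρ, hρ, hρ', -⟩ := exists_representatives (F : Set G.E) fun _ => True
  obtain ⟨g, -, h4, h5⟩ := hP.exists_coloring_five_ten hρ hρ' ∅ (by simp) (by simp)
  refine ⟨g, h4, ?_⟩
  set R := C.filter fun v => (F ∩ G.star v).card = 2 ∧ ρ v = v ∧
          Odd (comp (F : Set G.E) v \ ∅).card
  have hR : ∀ r ∈ R, r ∈ C ∧ (F ∩ G.star r).card = 2 ∧ ρ r = r ∧
      Odd (comp (F : Set G.E) r \ ∅).card := fun r hr => Finset.mem_filter.1 hr
  have h6 := five_mul_card_le (Q := C) (U := ∅) hρ' (R := R) (fun r hr => (hR r hr).2.2.1)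
    (fun r hr => hP.comp_subset (hR r hr).1)
    (fun r hr => hP.five_le_of_odd_sdiff (hR r hr).1 (hR r hr).2.1 (hR r hr).2.2.2)
  rw [h3] at h5
  simp only [Finset.card_empty] at h5 h6
  omega

end

theorem bad_congr {f g : G.E → Fin 15} {X : Finset G.V}
    (h : ∀ v ∈ X, ∀ e ∈ G.star v, f e = g e) : bad f X = bad g X :=
  Finset.filter_congr fun v hv => not_congr (good_congr (h v hv))

/-- Colourings of pieces which agree on common edges can be glued. -/
theorem exists_glue {ι : Type*} (X : ι → Finset G.V) (f : ι → G.E → Fin 15)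
    (h : ∀ i j, ∀ u ∈ X i, ∀ v ∈ X j, ∀ e ∈ G.star u, e ∈ G.star v → f i e = f j e) :
    ∃ g : G.E → Fin 15, ∀ i, ∀ v ∈ X i, ∀ e ∈ G.star v, g e = f i e := by
  refine ⟨fun e => if he : ∃ i, ∃ u ∈ X i, e ∈ G.star u then f he.choose e else 0, ?_⟩
  intro i v hv e he
  have hex : ∃ i, ∃ u ∈ X i, e ∈ G.star u := ⟨i, v, hv, he⟩
  obtain ⟨u, hu, heu⟩ := hex.choose_spec
  exact (dif_pos hex).trans (h _ _ u hu v hv e heu he)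

theorem Good.comp {f : G.E → Fin 15} {v : G.V} (h : Good f v) {σ : Fin 15 → Fin 15}
    (hσ : ∀ s ∈ sylvesterStars, s.image σ ∈ sylvesterStars) : Good (σ ∘ f) v := by
  rw [Good, ← Finset.image_image]
  exact hσ _ h

theorem Rep.comp {f : G.E → Fin 15} {v : G.V} (h : Rep f v) (σ : Fin 15 → Fin 15) :
    Rep (σ ∘ f) v := by
  obtain ⟨e, he, e', he', hne, h⟩ := h
  exact ⟨e, he, e', he', hne, congrArg σ h⟩

/-- Every admissible colour of the edge `e₀` leaving `X` extends to `X`, at a cost which is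
adjusted if `X` has three vertices. -/
def BranchColorable (X : Finset G.V) (e₀ : G.E) : Prop :=
  ∀ κ ∈ bridgeColors, ∃ f : G.E → Fin 15, f e₀ = κ ∧ (∀ v ∈ X, Good f v ∨ Rep f v) ∧
    5 * ((bad f X).card : ℤ) ≤ X.card + if X.card = 3 then wt κ else 0

theorem image_mem_sylvesterStars {σ : Fin 15 → Fin 15}
    (h : {σ 0, σ 5, σ 10} ∈ sylvesterStars ∧ {σ 0, σ 1, σ 2} ∈ sylvesterStars ∧
      {σ 1, σ 3, σ 4} ∈ sylvesterStars ∧ {σ 2, σ 3, σ 4} ∈ sylvesterStars ∧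
      {σ 5, σ 6, σ 7} ∈ sylvesterStars ∧ {σ 6, σ 8, σ 9} ∈ sylvesterStars ∧
      {σ 7, σ 8, σ 9} ∈ sylvesterStars ∧ {σ 10, σ 11, σ 12} ∈ sylvesterStars ∧
      {σ 11, σ 13, σ 14} ∈ sylvesterStars ∧ {σ 12, σ 13, σ 14} ∈ sylvesterStars) :
    ∀ s ∈ sylvesterStars, s.image σ ∈ sylvesterStars := by
  intro s hs
  simp only [sylvesterStars, Finset.mem_insert, Finset.mem_singleton] at hs
  rcases hs with rfl | rfl | rfl | rfl | rfl | rfl | rfl | rfl | rfl | rfl <;>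
    simp only [Finset.image_insert, Finset.image_singleton] <;> tauto

/-- By symmetry of the Sylvester graph two colours suffice. -/
theorem branchColorable_of_zero_one {X : Finset G.V} {e₀ : G.E}
    (h : ∀ κ : Fin 15, κ = 0 ∨ κ = 1 → ∃ f : G.E → Fin 15, f e₀ = κ ∧
      (∀ v ∈ X, Good f v ∨ Rep f v) ∧
      5 * ((bad f X).card : ℤ) ≤ X.card + if X.card = 3 then wt κ else 0) :
    BranchColorable X e₀ := by
  have key : ∀ (σ : Fin 15 → Fin 15) (κ : Fin 15), κ = 0 ∨ κ = 1 → wt (σ κ) = wt κ →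
      (∀ s ∈ sylvesterStars, s.image σ ∈ sylvesterStars) → ∃ f : G.E → Fin 15, f e₀ = σ κ ∧
      (∀ v ∈ X, Good f v ∨ Rep f v) ∧
      5 * ((bad f X).card : ℤ) ≤ X.card + if X.card = 3 then wt (σ κ) else 0 := by
    intro σ κ hκ hw hσ
    obtain ⟨f, h1, h2, h3⟩ := h κ hκ
    refine ⟨σ ∘ f, by simp [h1], fun v hv => (h2 v hv).imp (·.comp hσ) (·.comp σ), ?_⟩
    rw [hw]
    have : (bad (σ ∘ f) X).card ≤ (bad f X).card :=
      Finset.card_le_card (Finset.monotone_filter_right _ fun v _ hv hg => hv (hg.comp hσ))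
    omega
  intro κ hκ
  have : κ = 0 ∨ κ = 1 ∨ κ = 2 ∨ κ = 5 ∨ κ = 10 := by revert κ; decide
  rcases this with rfl | rfl | rfl | rfl | rfl
  · exact h 0 (.inl rfl)
  · exact h 1 (.inr rfl)
  · exact key ![0, 2, 1, 3, 4, 5, 6, 7, 8, 9, 10, 11, 12, 13, 14] 1 (.inr rfl) (by decide)
      (image_mem_sylvesterStars (by decide))
  · exact key ![5, 6, 7, 8, 9, 0, 1, 2, 3, 4, 10, 11, 12, 13, 14] 0 (.inl rfl) (by decide)
      (image_mem_sylvesterStars (by decide))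
  · exact key ![10, 11, 12, 13, 14, 5, 6, 7, 8, 9, 0, 1, 2, 3, 4] 0 (.inl rfl) (by decide)
      (image_mem_sylvesterStars (by decide))

theorem Cubic.star_eq (hG : G.Cubic) {v : G.V} {s : Finset G.E} (h : s ⊆ G.star v)
    (hs : s.card = 3) : G.star v = s :=
  (Finset.eq_of_subset_of_card_le h (by rw [hs, hG.card_star])).symm

/-- A branch with three vertices is an end-block of the Sylvester graph. -/
theorem branchColorable_of_card_eq_three (hG : G.Cubic) {X : Finset G.V} {e₀ : G.E}
    (hX : bd X = {e₀}) (h3 : X.card = 3) : BranchColorable X e₀ := by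
  obtain ⟨x, hx, x', hx', hends⟩ := mem_bd.1 (show e₀ ∈ bd X by simp [hX])
  have he₀x : e₀ ∈ G.star x := (mem_star_iff hends).2 (.inl rfl)
  have h4 : (inner X).card = 4 := by
    have := hG.three_mul_card X
    rw [h3, hX, Finset.card_singleton] at this
    omega
  obtain ⟨e₁, e₂, h12, hx12⟩ := Finset.card_eq_two.1 (show ((G.star x).erase e₀).card = 2 by
    rw [Finset.card_erase_of_mem he₀x, hG.card_star])
  have hsx : G.star x = {e₀, e₁, e₂} := by rw [← Finset.insert_erase he₀x, hx12]
  have hi : ∀ e ∈ (G.star x).erase e₀, e ∈ inner X := by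
    intro e he
    rw [Finset.mem_erase] at he
    refine (star_subset hG.1 hx he.2).resolve_right ?_
    rw [hX, Finset.mem_singleton]; exact he.1
  have hi₁ := hi e₁ (by simp [hx12])
  have hi₂ := hi e₂ (by simp [hx12])
  have hne : ∀ e ∈ inner X, e ≠ e₀ := by
    rintro e he rfl
    exact notMem_bd_of_mem_inner he (by simp [hX])
  obtain ⟨e₃, e₄, h34, hI⟩ := Finset.card_eq_two.1 (show (inner X \ {e₁, e₂}).card = 2 by
    rw [Finset.card_sdiff_of_subset (by simp [Finset.insert_subset_iff, hi₁, hi₂]), h4,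
      Finset.card_pair h12])
  obtain ⟨y, z, hyz, hX'⟩ := Finset.card_eq_two.1 (show (X.erase x).card = 2 by
    rw [Finset.card_erase_of_mem hx, h3])
  have hYZ : ∀ w, w ∈ X → w ≠ x → w = y ∨ w = z := by
    intro w hw hwx
    have : w ∈ X.erase x := Finset.mem_erase.2 ⟨hwx, hw⟩
    simpa [hX'] using this
  have hend : ∀ e ∈ inner X \ {e₁, e₂}, ∀ w ∈ X.erase x, e ∈ G.star w := by
    intro e he w hw
    rw [Finset.mem_sdiff] at he
    have hex : e ∉ G.star x := by
      have := hne e he.1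
      simp only [hsx, Finset.mem_insert, Finset.mem_singleton] at he ⊢
      tauto
    obtain ⟨p, q, hpq, h⟩ := exists_ends hG.1 e
    obtain ⟨hp, hq⟩ := (mem_inner_iff h).1 he.1
    rw [mem_star_iff h] at hex ⊢
    have h1 := hYZ p hp (by tauto)
    have h2 := hYZ q hq (by tauto)
    rw [hX', Finset.mem_insert, Finset.mem_singleton] at hw
    grind
  have hother : ∀ e ∈ (G.star x).erase e₀, ∃ w ∈ X.erase x, e ∈ G.star w := by
    intro e he
    obtain ⟨w, hw, h⟩ := exists_ends_of_mem hG.1 (Finset.mem_erase.1 he).2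
    exact ⟨w, Finset.mem_erase.2 ⟨hw.symm, ((mem_inner_iff h).1 (hi e he)).2⟩,
      (mem_star_iff h).2 (.inr rfl)⟩
  have m3 : e₃ ∈ inner X \ {e₁, e₂} := by simp [hI]
  have m4 : e₄ ∈ inner X \ {e₁, e₂} := by simp [hI]
  have n3 : e₃ ≠ e₁ ∧ e₃ ≠ e₂ := by simpa using (Finset.mem_sdiff.1 m3).2
  have n4 : e₄ ≠ e₁ ∧ e₄ ≠ e₂ := by simpa using (Finset.mem_sdiff.1 m4).2
  have hn0 : e₁ ≠ e₀ ∧ e₂ ≠ e₀ ∧ e₃ ≠ e₀ ∧ e₄ ≠ e₀ := ⟨hne _ hi₁, hne _ hi₂,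
    hne _ (Finset.mem_sdiff.1 m3).1, hne _ (Finset.mem_sdiff.1 m4).1⟩
  have hstar : ∀ e, (e = e₁ ∨ e = e₂) → ∃ w ∈ X.erase x, G.star w = {e, e₃, e₄} := by
    intro e he
    obtain ⟨w, hw, hew⟩ := hother e (by rw [hx12]; simpa using he)
    refine ⟨w, hw, hG.star_eq ?_ (Finset.card_eq_three.2 ⟨e, e₃, e₄, ?_, ?_, h34, rfl⟩)⟩
    · simp [Finset.insert_subset_iff, hew, hend e₃ m3 w hw, hend e₄ m4 w hw]
    · rcases he with rfl | rfl; exacts [n3.1.symm, n3.2.symm]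
    · rcases he with rfl | rfl; exacts [n4.1.symm, n4.2.symm]
  obtain ⟨w₁, hw₁, hs₁⟩ := hstar e₁ (.inl rfl)
  obtain ⟨w₂, hw₂, hs₂⟩ := hstar e₂ (.inr rfl)
  have hw12 : w₁ ≠ w₂ := by
    rintro rfl
    have : e₁ ∈ G.star w₁ := by simp [hs₁]
    simp [hs₂, h12, n3.1.symm, n4.1.symm] at this
  have hXe : X = {x, w₁, w₂} := by
    rw [← Finset.insert_erase hx]
    congr 1
    refine (Finset.eq_of_subset_of_card_le ?_ ?_).symm
    · simp [Finset.insert_subset_iff, hw₁, hw₂, -Finset.mem_erase]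
    · rw [Finset.card_pair hw12, Finset.card_erase_of_mem hx, h3]
  have hcol : ∀ a : Fin 5 → Fin 15, ∃ f : G.E → Fin 15, f e₀ = a 0 ∧ f e₁ = a 1 ∧ f e₂ = a 2 ∧
      f e₃ = a 3 ∧ f e₄ = a 4 := by
    intro a
    refine ⟨fun e => if e = e₀ then a 0 else if e = e₁ then a 1 else if e = e₂ then a 2 else
      if e = e₃ then a 3 else a 4, ?_⟩
    obtain ⟨a1, a2, a3, a4⟩ := hn0
    simp [a1, a2, a3, a4, h12.symm, n3, n4, h34.symm]
  refine branchColorable_of_zero_one fun κ hκ => ?_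
  rw [if_pos h3, h3]
  rcases hκ with rfl | rfl
  · obtain ⟨f, f0, f1, f2, f3, f4⟩ := hcol ![0, 1, 2, 3, 4]
    have hg : ∀ v ∈ X, Good f v := by
      simp only [hXe, Finset.mem_insert, Finset.mem_singleton, forall_eq_or_imp, forall_eq]
      refine ⟨good_of_star hsx ?_, good_of_star hs₁ ?_, good_of_star hs₂ ?_⟩ <;>
        simp only [f0, f1, f2, f3, f4] <;> decide
    refine ⟨f, f0, fun v hv => .inl (hg v hv), ?_⟩
    rw [bad, Finset.filter_eq_empty_iff.2 fun v hv => not_not.2 (hg v hv), Finset.card_empty]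
    have : wt 0 = -3 := by decide
    omega
  · obtain ⟨f, f0, f1, f2, f3, f4⟩ := hcol ![1, 3, 4, 4, 1]
    have hgx : Good f x := good_of_star hsx (by simp only [f0, f1, f2]; decide)
    have hg₁ : Good f w₁ := good_of_star hs₁ (by simp only [f1, f3, f4]; decide)
    refine ⟨f, f0, ?_, ?_⟩
    · simp only [hXe, Finset.mem_insert, Finset.mem_singleton, forall_eq_or_imp, forall_eq]
      exact ⟨.inl hgx, .inl hg₁, .inr ⟨e₂, by simp [hs₂], e₃, by simp [hs₂], n3.2.symm, by
        rw [f2, f3]; rfl⟩⟩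
    · have : bad f X ⊆ {w₂} := by
        intro v hv
        rw [bad, Finset.mem_filter, hXe] at hv
        simp only [Finset.mem_insert, Finset.mem_singleton] at hv ⊢
        rcases hv with ⟨rfl | rfl | rfl, h⟩
        · exact absurd hgx h
        · exact absurd hg₁ h
        · rfl
      have := Finset.card_le_card this
      rw [Finset.card_singleton] at this
      have : wt 1 = 2 := by decide
      omega

/-- The part of a branch `X` which contains the end of `e₀` and has no bridge, together with the
branches `Y e` at the bridges `e` leaving it. -/
structure BranchCore (X : Finset G.V) (e₀ : G.E) (C : Finset G.V) (Y : G.E → Finset G.V) :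
    Prop where
  subset : C ⊆ X
  nonempty : C.Nonempty
  mem : e₀ ∈ bd C
  branch : ∀ e ∈ bd C, e ≠ e₀ → Y e ⊆ X ∧ bd (Y e) = {e} ∧ Disjoint C (Y e)
  disjoint : ∀ e ∈ bd C, e ≠ e₀ → ∀ e' ∈ bd C, e' ≠ e₀ → e ≠ e' → Disjoint (Y e) (Y e')
  cover : X ⊆ C ∪ ((bd C).erase e₀).biUnion Y
  cut : ∀ D ⊆ C, D.Nonempty → D ≠ C → 2 ≤ (bd D ∩ inner C).card

/-- A vertex set with no boundary inside a branch is empty. -/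
theorem eq_empty_of_bd_eq_empty {X : Finset G.V}
    (hX : ∀ Z ⊆ X, Z.Nonempty → bd Z ≠ ∅) {Z : Finset G.V} (hZ : Z ⊆ X) (h : ∀ e, e ∉ bd Z) :
    Z = ∅ := by
  by_contra hne
  exact hX Z hZ (Finset.nonempty_iff_ne_empty.2 hne) (Finset.eq_empty_of_forall_notMem h)

theorem exists_mem_bd_of_reach {A : Set G.E} {D : Finset G.V} {u v : G.V} (h : G.Reach A u v)
    (hu : u ∈ D) (hv : v ∉ D) : ∃ e ∈ A, ∃ x ∈ comp A u, ∃ y ∈ comp A u, x ∈ D ∧ y ∉ D ∧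
      G.ends e = s(x, y) := by
  induction h with
  | refl => exact absurd hu hv
  | @tail x y hx hxy ih =>
    by_cases hxD : x ∈ D
    · obtain ⟨e, he, h⟩ := hxy
      exact ⟨e, he, x, mem_comp.2 hx, y, mem_comp.2 (hx.tail ⟨e, he, h⟩), hxD, hv, h⟩
    · exact ih hxD

theorem exists_branchCore (hG : G.Cubic) {X : Finset G.V} {e₀ : G.E} (hX : bd X = {e₀})
    (hconn : ∀ Z ⊆ X, Z.Nonempty → bd Z ≠ ∅) : ∃ C Y, BranchCore X e₀ C Y := by
  obtain ⟨v₀, hv₀, w₀, hw₀, hends⟩ := mem_bd.1 (show e₀ ∈ bd X by simp [hX])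
  let A : Set G.E := {e | e ∈ inner X ∧ ∀ Y ⊆ X, bd Y ≠ {e}}
  set C := comp A v₀ with hC
  have hv₀C : v₀ ∈ C := self_mem_comp
  have hCX : C ⊆ X := by
    intro w hw
    rcases mem_comp.1 hw with _ | ⟨-, e, he, h⟩
    · exact hv₀
    · exact ((mem_inner_iff h).1 he.1).2
  have hY : ∀ e ∈ bd C, e ≠ e₀ → ∃ Y ⊆ X, bd Y = {e} := by
    intro e he hne
    by_contra! h
    refine notMem_of_mem_bd_comp he ⟨?_, h⟩
    obtain ⟨u, hu, w, -, h'⟩ := mem_bd.1 he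
    refine (star_subset hG.1 (hCX hu) ((mem_star_iff h').2 (.inl rfl))).resolve_right ?_
    rwa [hX, Finset.mem_singleton]
  choose! Y hYX hYb using hY
  have hdisj : ∀ e ∈ bd C, e ≠ e₀ → Disjoint C (Y e) := by
    intro e he hne
    rw [Finset.disjoint_left]
    intro c hc hcY
    have hv₀Y : v₀ ∉ Y e := by
      intro h
      have : e₀ ∈ bd (Y e) := (mem_bd_iff hends).2 (.inl ⟨h, fun h' => hw₀ (hYX e he hne h')⟩)
      rw [hYb e he hne, Finset.mem_singleton] at this
      exact hne this.symm
    have hr : G.Reach A c v₀ := (mem_comp.1 hc).symm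
    obtain ⟨a, ha, x, -, y, -, hx, hy, h⟩ := exists_mem_bd_of_reach hr hcY hv₀Y
    have : a ∈ bd (Y e) := (mem_bd_iff h).2 (.inl ⟨hx, hy⟩)
    rw [hYb e he hne, Finset.mem_singleton] at this
    exact ha.2 (Y e) (hYX e he hne) (by rw [this, hYb e he hne])
  have he₀C : e₀ ∈ bd C := (mem_bd_iff hends).2 (.inl ⟨hv₀C, fun h => hw₀ (hCX h)⟩)
  have hout : ∀ e ∈ bd C, ∀ c ∈ C, ∀ y, G.ends e = s(c, y) → y ∉ C := by
    intro e he c hc y h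
    rw [mem_bd_iff h] at he
    tauto
  -- the outer end of a bridge lies in its branch
  have hend : ∀ e ∈ bd C, e ≠ e₀ → ∀ c ∈ C, ∀ y, G.ends e = s(c, y) → y ∈ Y e := by
    intro e he hne c hc y h
    have h1 : e ∈ bd (Y e) := by rw [hYb e he hne]; simp
    rw [mem_bd_iff h] at h1
    have := Finset.disjoint_left.1 (hdisj e he hne) hc
    tauto
  have he₀end : ∀ c ∈ C, ∀ y, G.ends e₀ = s(c, y) → c = v₀ ∧ y ∉ X := by
    intro c hc y h
    rw [hends, Sym2.eq_iff] at h
    rcases h with ⟨rfl, rfl⟩ | ⟨rfl, rfl⟩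
    · exact ⟨rfl, hw₀⟩
    · exact absurd (hCX hc) hw₀
  refine ⟨C, Y, hCX, ⟨v₀, hv₀C⟩, he₀C, fun e he hne => ⟨hYX e he hne, hYb e he hne,
    hdisj e he hne⟩, ?_, ?_, ?_⟩
  · intro e he hne e' he' hne' hee
    rw [Finset.disjoint_iff_inter_eq_empty]
    refine eq_empty_of_bd_eq_empty hconn (Finset.inter_subset_left.trans (hYX e he hne)) ?_
    intro h hh
    obtain ⟨u, hu, w, hw, hends'⟩ := mem_bd.1 hh
    rw [Finset.mem_inter] at hu hw
    -- an edge leaving the intersection leaves both branches, as its other end is in `C`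
    have aux : ∀ e ∈ bd C, e ≠ e₀ → ∀ e' ∈ bd C, e' ≠ e₀ → u ∈ Y e → u ∈ Y e' → w ∉ Y e →
        e = e' := by
      intro e he hne e' he' hne' hu hu' hw
      have h1 : h ∈ bd (Y e) := (mem_bd_iff hends').2 (.inl ⟨hu, hw⟩)
      rw [hYb e he hne, Finset.mem_singleton] at h1
      subst h1
      have huC : u ∉ C := Finset.disjoint_right.1 (hdisj h he hne) hu
      rw [mem_bd_iff hends'] at he
      have hwC : w ∈ C := by tauto
      have h2 : h ∈ bd (Y e') :=
        (mem_bd_iff hends').2 (.inl ⟨hu', Finset.disjoint_left.1 (hdisj e' he' hne') hwC⟩)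
      rw [hYb e' he' hne', Finset.mem_singleton] at h2
      exact h2
    by_cases hwY : w ∈ Y e
    · exact hee (aux e' he' hne' e he hne hu.2 hu.1 (by tauto)).symm
    · exact hee (aux e he hne e' he' hne' hu.1 hu.2 hwY)
  · rw [← Finset.sdiff_eq_empty_iff_subset]
    refine eq_empty_of_bd_eq_empty hconn Finset.sdiff_subset ?_
    intro h hh
    obtain ⟨u, hu, w, hw, hends'⟩ := mem_bd.1 hh
    simp only [Finset.mem_sdiff, Finset.mem_union, Finset.mem_biUnion, Finset.mem_erase, not_or,
      not_and, not_not] at hu hw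
    obtain ⟨huX, huC, huY⟩ := hu
    by_cases hwX : w ∈ X
    · by_cases hwC : w ∈ C
      · have hb : h ∈ bd C := (mem_bd_iff hends').2 (.inr ⟨hwC, huC⟩)
        have hswap : G.ends h = s(w, u) := by rw [hends', Sym2.eq_swap]
        by_cases h0 : h = e₀
        · subst h0
          exact (he₀end w hwC u hswap).2 huX
        · exact huY ⟨h, ⟨h0, hb⟩, hend h hb h0 w hwC u hswap⟩
      · obtain ⟨e, ⟨hne, he⟩, hwe⟩ := hw hwX hwC
        have h1 : h ∈ bd (Y e) :=
          (mem_bd_iff hends').2 (.inr ⟨hwe, fun h' => huY ⟨e, ⟨hne, he⟩, h'⟩⟩)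
        rw [hYb e he hne, Finset.mem_singleton] at h1
        subst h1
        rw [mem_bd_iff hends'] at he
        tauto
    · have h1 : h ∈ bd X := (mem_bd_iff hends').2 (.inl ⟨huX, hwX⟩)
      rw [hX, Finset.mem_singleton] at h1
      rw [h1] at hends'
      rw [hends, Sym2.eq_iff] at hends'
      rcases hends' with ⟨rfl, rfl⟩ | ⟨rfl, rfl⟩
      · exact huC hv₀C
      · exact hwX hv₀
  · have main : ∀ D ⊆ C, D.Nonempty → v₀ ∉ D → 2 ≤ (bd D ∩ inner C).card := by
      intro D hD hDne hvD
      obtain ⟨d, hd⟩ := hDne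
      have hr : G.Reach A d v₀ := (mem_comp.1 (hD hd)).symm
      have hcd : comp A d = C := comp_eq hr
      obtain ⟨a, ha, x, hx, y, hy, hxD, hyD, hxy⟩ := exists_mem_bd_of_reach hr hd hvD
      rw [hcd] at hx hy
      have haD : a ∈ bd D ∩ inner C :=
        Finset.mem_inter.2 ⟨(mem_bd_iff hxy).2 (.inl ⟨hxD, hyD⟩), (mem_inner_iff hxy).2 ⟨hx, hy⟩⟩
      by_contra hlt
      have h1 : ∀ h ∈ bd D ∩ inner C, h = a := fun h hh =>
        Finset.card_le_one.1 (show (bd D ∩ inner C).card ≤ 1 by omega) h hh a haD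
      let T := (bd C).filter fun e => ∃ u ∈ D, e ∈ G.star u
      have hT : ∀ e ∈ T, e ∈ bd C ∧ e ≠ e₀ := by
        intro e he
        obtain ⟨heC, u, hu, heu⟩ := Finset.mem_filter.1 he
        refine ⟨heC, ?_⟩
        rintro rfl
        obtain ⟨w, -, h⟩ := exists_ends_of_mem hG.1 heu
        exact hvD ((he₀end u (hD hu) w h).1 ▸ hu)
      refine ha.2 (D ∪ T.biUnion Y) ?_ ?_
      · exact Finset.union_subset (hD.trans hCX)
          (Finset.biUnion_subset.2 fun e he => hYX e (hT e he).1 (hT e he).2)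
      · refine Finset.eq_singleton_iff_unique_mem.2 ⟨?_, ?_⟩
        · refine (mem_bd_iff hxy).2 (.inl ⟨Finset.mem_union_left _ hxD, ?_⟩)
          rw [Finset.mem_union, Finset.mem_biUnion]
          rintro (h | ⟨e, he, h⟩)
          · exact hyD h
          · exact Finset.disjoint_left.1 (hdisj e (hT e he).1 (hT e he).2) hy h
        · intro h hh
          obtain ⟨u, hu, w, hw, hends'⟩ := mem_bd.1 hh
          rw [Finset.mem_union, Finset.mem_biUnion] at hu hw
          push Not at hw
          rcases hu with hu | ⟨e, he, hue⟩
          · by_cases hwC : w ∈ C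
            · exact h1 h (Finset.mem_inter.2 ⟨(mem_bd_iff hends').2 (.inl ⟨hu, hw.1⟩),
                (mem_inner_iff hends').2 ⟨hD hu, hwC⟩⟩)
            · have hb : h ∈ bd C := (mem_bd_iff hends').2 (.inl ⟨hD hu, hwC⟩)
              have hhT : h ∈ T :=
                Finset.mem_filter.2 ⟨hb, u, hu, (mem_star_iff hends').2 (.inl rfl)⟩
              exact absurd (hend h hb (hT h hhT).2 u (hD hu) w hends') (hw.2 h hhT)
          · obtain ⟨heC, hne⟩ := hT e he
            have h2 : h ∈ bd (Y e) := (mem_bd_iff hends').2 (.inl ⟨hue, hw.2 e he⟩)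
            rw [hYb e heC hne, Finset.mem_singleton] at h2
            subst h2
            obtain ⟨-, c, hc, hhc⟩ := Finset.mem_filter.1 he
            rcases (mem_star_iff hends').1 hhc with rfl | rfl
            · exact absurd hue (Finset.disjoint_left.1 (hdisj h heC hne) (hD hc))
            · exact absurd hc hw.1
    intro D hD hDne hDC
    by_cases hvD : v₀ ∈ D
    · have h1 : bd D ∩ inner C = bd (C \ D) ∩ inner C := by
        ext h
        simp only [Finset.mem_inter, and_congr_left_iff]
        intro hi
        obtain ⟨u, w, -, hends'⟩ := exists_ends hG.1 h
        rw [mem_inner_iff hends'] at hi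
        rw [mem_bd_iff hends', mem_bd_iff hends', Finset.mem_sdiff, Finset.mem_sdiff]
        tauto
      rw [h1]
      refine main _ Finset.sdiff_subset ?_ (by simp [hvD])
      rw [Finset.sdiff_nonempty]
      exact fun h => hDC (hD.antisymm h)
    · exact main D hD hDne hvD

theorem mem_bd_of_mem_star {X : Finset G.V} {u v : G.V} {e : G.E} (hl : G.Loopless) (hu : u ∈ X)
    (hv : v ∉ X) (heu : e ∈ G.star u) (hev : e ∈ G.star v) : e ∈ bd X := by
  obtain ⟨w, -, h⟩ := exists_ends_of_mem hl heu
  rcases (mem_star_iff h).1 hev with rfl | rfl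
  · exact absurd hu hv
  · exact (mem_bd_iff h).2 (.inl ⟨hu, hv⟩)

/-- No triangle can be contracted. -/
def NoContractibleTriangle (G : Multigraph) : Prop :=
  ∀ x y z e₁ e₂ e₃, G.IsTriangle e₁ e₂ e₃ x y z → (inner {x, y, z}).card ≠ 3

theorem subset_inner_of_isTriangle {x y z : G.V} {e₁ e₂ e₃ : G.E}
    (h : G.IsTriangle e₁ e₂ e₃ x y z) : {e₁, e₂, e₃} ⊆ inner {x, y, z} := by
  obtain ⟨-, -, -, h₁, h₂, h₃⟩ := h
  simp [Finset.insert_subset_iff, mem_inner_iff h₁, mem_inner_iff h₂, mem_inner_iff h₃]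

theorem IsTriangle.edges_ne {x y z : G.V} {e₁ e₂ e₃ : G.E}
    (h : G.IsTriangle e₁ e₂ e₃ x y z) : e₁ ≠ e₂ ∧ e₁ ≠ e₃ ∧ e₂ ≠ e₃ := by
  obtain ⟨hxy, hyz, hxz, h₁, h₂, h₃⟩ := h
  refine ⟨?_, ?_, ?_⟩ <;> rintro rfl <;> grind [Sym2.eq_iff]

theorem eq_of_isTriangle (hG : G.Cubic) (ht : G.NoContractibleTriangle) {C : Finset G.V}
    (hcut : ∀ D ⊆ C, D.Nonempty → D ≠ C → 2 ≤ (bd D ∩ inner C).card) {x y z : G.V} (hx : x ∈ C)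
    (hy : y ∈ C) (hz : z ∈ C) {e₁ e₂ e₃ : G.E} (h : G.IsTriangle e₁ e₂ e₃ x y z) :
    C.card = 3 ∧ (bd C).card = 1 := by
  have h1 : ({x, y, z} : Finset G.V).card = 3 :=
    Finset.card_eq_three.2 ⟨x, y, z, h.1, h.2.2.1, h.2.1, rfl⟩
  have h2 := hG.three_mul_card {x, y, z}
  have h3 := Finset.card_le_card (subset_inner_of_isTriangle h)
  rw [Finset.card_eq_three.2 ⟨e₁, e₂, e₃, h.edges_ne.1, h.edges_ne.2.1, h.edges_ne.2.2, rfl⟩] at h3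
  have h4 := ht x y z e₁ e₂ e₃ h
  have h5 : ({x, y, z} : Finset G.V) = C := by
    by_contra hne
    have := hcut {x, y, z} (by simp [Finset.insert_subset_iff, hx, hy, hz]) (by simp) hne
    have := Finset.card_le_card (Finset.inter_subset_left (s₁ := bd {x, y, z}) (s₂ := inner C))
    omega
  rw [← h5]
  exact ⟨h1, by omega⟩

theorem bd_singleton (hl : G.Loopless) (v : G.V) : bd {v} = G.star v := by
  ext e
  constructor
  · intro h
    obtain ⟨u, hu, w, -, h⟩ := mem_bd.1 h
    exact (mem_star_iff h).2 (.inl (Finset.mem_singleton.1 hu).symm)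
  · intro h
    obtain ⟨w, hw, h⟩ := exists_ends_of_mem hl h
    exact (mem_bd_iff h).2 (.inl ⟨by simp, by simpa using hw.symm⟩)

theorem coreColoring_singleton (hG : G.Cubic) {v : G.V} {e₀ : G.E} {S : Finset G.E}
    {κ : Fin 15} (hS : S ⊆ bd {v}) (he₀ : e₀ ∈ bd {v}) (heS : e₀ ∉ S) (hκ : κ = 0 ∨ κ = 1) :
    CoreColoring {v} e₀ S κ := by
  rw [bd_singleton hG.1] at hS he₀
  obtain ⟨e₁, e₂, h12, h⟩ := Finset.card_eq_two.1 (show ((G.star v).erase e₀).card = 2 by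
    rw [Finset.card_erase_of_mem he₀, hG.card_star])
  have hs : G.star v = {e₀, e₁, e₂} := by rw [← Finset.insert_erase he₀, h]
  have h01 : e₁ ≠ e₀ := Finset.ne_of_mem_erase (s := G.star v) (by simp [h])
  have h02 : e₂ ≠ e₀ := Finset.ne_of_mem_erase (s := G.star v) (by simp [h])
  have key : ∀ a b : Fin 15, κ ∈ bridgeColors → a ∈ bridgeColors → b ∈ bridgeColors →
      {κ, a, b} ∈ sylvesterStars →
      (if e₁ ∈ S then wt a else 0) + (if e₂ ∈ S then wt b else 0) ≤ 1 →
      CoreColoring {v} e₀ S κ := by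
    intro a b hκ ha hb hab hw
    refine ⟨fun e => if e = e₀ then κ else if e = e₁ then a else b, by simp, ?_, ?_, ?_⟩
    · intro e _
      dsimp only
      split_ifs <;> assumption
    all_goals
      have hg : Good (fun e => if e = e₀ then κ else if e = e₁ then a else b) v :=
        good_of_star hs (by simpa [h01, h02, h12.symm] using hab)
    · simpa using .inl hg
    · have hS' : S = {e₁, e₂} ∩ S := by
        rw [← h, eq_comm, Finset.inter_eq_right]
        exact fun e he => Finset.mem_erase.2 ⟨fun h => heS (h ▸ he), hS he⟩
      rw [hS', ← Finset.sum_ite_mem, Finset.sum_pair h12, bad,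
        Finset.filter_eq_empty_iff.2 (by simpa using hg)]
      simpa [h01, h02, h12.symm] using hw
  have w0 : wt 0 = -3 := by decide
  have w2 : wt 2 = 2 := by decide
  have w5 : wt 5 = -3 := by decide
  have w10 : wt 10 = -3 := by decide
  rcases hκ with rfl | rfl
  · refine key 5 10 (by decide) (by decide) (by decide) (by decide) ?_
    rw [w5, w10]; split_ifs <;> norm_num
  · by_cases h1 : e₁ ∈ S
    · refine key 0 2 (by decide) (by decide) (by decide) (by decide) ?_
      rw [w0, w2, if_pos h1]; split_ifs <;> norm_num
    · refine key 2 0 (by decide) (by decide) (by decide) (by decide) ?_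
      rw [w0, if_neg h1]; split_ifs <;> norm_num

theorem BranchCore.exists_coloring (hG : G.Cubic) {X C : Finset G.V} {e₀ : G.E}
    {Y : G.E → Finset G.V} (hB : BranchCore X e₀ C Y)
    (hY : ∀ e ∈ (bd C).erase e₀, BranchColorable (Y e) e) {κ : Fin 15}
    (h : CoreColoring C e₀ (((bd C).erase e₀).filter fun e => (Y e).card = 3) κ) :
    ∃ f : G.E → Fin 15, f e₀ = κ ∧ (∀ v ∈ X, Good f v ∨ Rep f v) ∧
      5 * ((bad f X).card : ℤ) ≤ X.card := by
  obtain ⟨g, hg₀, hgb, hgC, hcost⟩ := h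
  set B := (bd C).erase e₀ with hBdef
  have hbr : ∀ e ∈ B, Y e ⊆ X ∧ bd (Y e) = {e} ∧ Disjoint C (Y e) := fun e he =>
    hB.branch e (Finset.mem_of_mem_erase he) (Finset.ne_of_mem_erase he)
  have hdis : ∀ e ∈ B, ∀ e' ∈ B, e ≠ e' → Disjoint (Y e) (Y e') := fun e he e' he' =>
    hB.disjoint e (Finset.mem_of_mem_erase he) (Finset.ne_of_mem_erase he) e'
      (Finset.mem_of_mem_erase he') (Finset.ne_of_mem_erase he')
  choose! F hF₀ hFX hFb using fun e (he : e ∈ B) =>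
    hY e he (g e) (hgb e (Finset.mem_of_mem_erase he))
  have hCY : ∀ e ∈ B, ∀ u ∈ C, ∀ v ∈ Y e, ∀ a ∈ G.star u, a ∈ G.star v → a = e := by
    intro e he u hu v hv a hau hav
    have := mem_bd_of_mem_star hG.1 hv (Finset.disjoint_left.1 (hbr e he).2.2 hu) hav hau
    rwa [(hbr e he).2.1, Finset.mem_singleton] at this
  have hYY : ∀ e ∈ B, ∀ e' ∈ B, e ≠ e' → ∀ u ∈ Y e, ∀ v ∈ Y e', ∀ a ∈ G.star u,
      a ∈ G.star v → a = e := by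
    intro e he e' he' hne u hu v hv a hau hav
    have := mem_bd_of_mem_star hG.1 hu (Finset.disjoint_right.1 (hdis e he e' he' hne) hv) hau hav
    rwa [(hbr e he).2.1, Finset.mem_singleton] at this
  obtain ⟨f, hf⟩ := exists_glue
    (fun i : Option {e // e ∈ B} => i.elim C fun e => Y e) (fun i => i.elim g fun e => F e) (by
      rintro (_ | ⟨e, he⟩) (_ | ⟨e', he'⟩) u hu v hv a hau hav
      · rfl
      · obtain rfl := hCY e' he' u hu v hv a hau hav
        exact (hF₀ a he').symm
      · obtain rfl := hCY e he v hv u hu a hav hau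
        exact hF₀ a he
      · by_cases hee : e = e'
        · subst hee; rfl
        · have h1 := hYY e he e' he' hee u hu v hv a hau hav
          have h2 := hYY e' he' e he (Ne.symm hee) v hv u hu a hav hau
          exact absurd (h1.symm.trans h2) hee)
  have hfC : ∀ v ∈ C, ∀ e ∈ G.star v, f e = g e := hf none
  have hfY : ∀ e ∈ B, ∀ v ∈ Y e, ∀ a ∈ G.star v, f a = F e a := fun e he => hf (some ⟨e, he⟩)
  refine ⟨f, ?_, ?_, ?_⟩
  · obtain ⟨u, hu, w, -, h⟩ := mem_bd.1 hB.mem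
    rw [hfC u hu e₀ ((mem_star_iff h).2 (.inl rfl)), hg₀]
  · intro v hv
    rcases Finset.mem_union.1 (hB.cover hv) with hv | hv
    · rw [good_congr (hfC v hv), rep_congr (hfC v hv)]
      exact hgC v hv
    · obtain ⟨e, he, hv⟩ := Finset.mem_biUnion.1 hv
      rw [good_congr (hfY e he v hv), rep_congr (hfY e he v hv)]
      exact hFX e he v hv
  · have h1 : (bad f X).card ≤ (bad g C).card + ∑ e ∈ B, (bad (F e) (Y e)).card := by
      have h2 : bad f X ⊆ bad f C ∪ B.biUnion fun e => bad f (Y e) := by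
        intro v hv
        rw [bad, Finset.mem_filter] at hv
        rw [Finset.mem_union, Finset.mem_biUnion]
        rcases Finset.mem_union.1 (hB.cover hv.1) with h | h
        · exact .inl (Finset.mem_filter.2 ⟨h, hv.2⟩)
        · obtain ⟨e, he, h⟩ := Finset.mem_biUnion.1 h
          exact .inr ⟨e, he, Finset.mem_filter.2 ⟨h, hv.2⟩⟩
      refine (Finset.card_le_card h2).trans ((Finset.card_union_le _ _).trans ?_)
      rw [bad_congr hfC]
      refine Nat.add_le_add_left (Finset.card_biUnion_le.trans (Finset.sum_le_sum ?_)) _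
      intro e he
      rw [bad_congr (hfY e he)]
    have h3 : C.card + ∑ e ∈ B, (Y e).card ≤ X.card := by
      rw [← Finset.card_biUnion hdis, ← Finset.card_union_of_disjoint
        ((Finset.disjoint_biUnion_right _ _ _).2 fun e he => (hbr e he).2.2)]
      exact Finset.card_le_card (Finset.union_subset hB.subset
        (Finset.biUnion_subset.2 fun e he => (hbr e he).1))
    have h4 := Finset.sum_le_sum hFb
    rw [← Finset.mul_sum, Finset.sum_add_distrib, ← Finset.sum_filter] at h4
    zify at h1 h3
    linarith

/-- Every branch is colourable. -/
theorem branchColorable (hG : G.Cubic) (ht : G.NoContractibleTriangle) {X : Finset G.V}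
    {e₀ : G.E} (hX : bd X = {e₀}) (hconn : ∀ Z ⊆ X, Z.Nonempty → bd Z ≠ ∅) :
    BranchColorable X e₀ := by
  induction X using Finset.strongInduction generalizing e₀ with
  | H X ih =>
  by_cases h3 : X.card = 3
  · exact branchColorable_of_card_eq_three hG hX h3
  obtain ⟨C, Y, hB⟩ := exists_branchCore hG hX hconn
  have hbr : ∀ e ∈ (bd C).erase e₀, BranchColorable (Y e) e := by
    intro e he
    obtain ⟨h1, h2, h4⟩ := hB.branch e (Finset.mem_of_mem_erase he) (Finset.ne_of_mem_erase he)
    obtain ⟨v, hv⟩ := hB.nonempty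
    refine ih (Y e) ⟨h1, fun h => ?_⟩ h2 fun Z hZ => hconn Z (hZ.trans h1)
    exact Finset.disjoint_left.1 h4 hv (h (hB.subset hv))
  refine branchColorable_of_zero_one fun κ hκ => ?_
  rw [if_neg h3, add_zero]
  refine hB.exists_coloring hG hbr ?_
  have hS : ((bd C).erase e₀).filter (fun e => (Y e).card = 3) ⊆ bd C :=
    (Finset.filter_subset _ _).trans (Finset.erase_subset _ _)
  have heS : e₀ ∉ ((bd C).erase e₀).filter (fun e => (Y e).card = 3) := by simp
  by_cases hC : ∃ v, C = {v}
  · obtain ⟨v, rfl⟩ := hC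
    exact coreColoring_singleton hG hS hB.mem heS hκ
  · refine coreColoring hG ?_ hB.cut ?_ hS hB.mem heS hκ
    · intro v hv
      have h1 := hB.cut {v} (by simpa using hv) (by simp) fun h => hC ⟨v, h.symm⟩
      rw [bd_singleton hG.1, Finset.inter_comm] at h1
      have := card_inner_inter_star hG hv
      omega
    · intro x hx y hy z hz e₁ e₂ e₃ h
      obtain ⟨h1, h2⟩ := eq_of_isTriangle hG ht hB.cut hx hy hz h
      obtain ⟨a, ha⟩ := Finset.card_eq_one.1 h2
      have h4 : (bd C).erase e₀ = ∅ := by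
        have := hB.mem
        rw [ha, Finset.mem_singleton] at this
        rw [ha, this]; simp
      have h5 := hB.cover
      rw [h4, Finset.biUnion_empty, Finset.union_empty] at h5
      exact h3 (by rw [h5.antisymm hB.subset, h1])

theorem bd_sdiff {X Y : Finset G.V} (hX : bd X = ∅) (hYX : Y ⊆ X) : bd (X \ Y) = bd Y := by
  have key : ∀ e u v, G.ends e = s(u, v) → (u ∈ X ↔ v ∈ X) := by
    intro e u v h
    have : e ∉ bd X := by simp [hX]
    rw [mem_bd_iff h] at this
    tauto
  ext e
  obtain ⟨u, v, h⟩ : ∃ u v, G.ends e = s(u, v) := by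
    induction h : G.ends e using Sym2.ind with
    | _ u v => exact ⟨u, v, rfl⟩
  rw [mem_bd_iff h, mem_bd_iff h, Finset.mem_sdiff, Finset.mem_sdiff]
  have := key e u v h
  have := @hYX u
  have := @hYX v
  tauto

/-- Gluing colourings of two complementary parts of a closed piece. -/
theorem exists_coloring_of_sdiff (hl : G.Loopless) {X Y : Finset G.V} (hYX : Y ⊆ X)
    {f f' : G.E → Fin 15} (hf : ∀ v ∈ Y, Good f v ∨ Rep f v)
    (hf' : ∀ v ∈ X \ Y, Good f' v ∨ Rep f' v) (hb : 5 * (bad f Y).card ≤ Y.card)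
    (hb' : 5 * (bad f' (X \ Y)).card ≤ (X \ Y).card) (h : ∀ e ∈ bd Y, f e = f' e) :
    ∃ g : G.E → Fin 15, (∀ v ∈ X, Good g v ∨ Rep g v) ∧ 5 * (bad g X).card ≤ X.card := by
  have key : ∀ u ∈ Y, ∀ v ∈ X \ Y, ∀ e, e ∈ G.star u → e ∈ G.star v → f e = f' e :=
    fun u hu v hv e heu hev => h e (mem_bd_of_mem_star hl hu (Finset.mem_sdiff.1 hv).2 heu hev)
  obtain ⟨g, hg⟩ := exists_glue (fun i : Bool => if i then Y else X \ Y)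
    (fun i => if i then f else f') (by
      rintro (_ | _) (_ | _) u hu v hv e heu hev
      · rfl
      · exact (key v hv u hu e hev heu).symm
      · exact key u hu v hv e heu hev
      · rfl)
  have h1 : ∀ v ∈ Y, ∀ e ∈ G.star v, g e = f e := hg true
  have h2 : ∀ v ∈ X \ Y, ∀ e ∈ G.star v, g e = f' e := hg false
  refine ⟨g, ?_, ?_⟩
  · intro v hv
    by_cases hvY : v ∈ Y
    · rw [good_congr (h1 v hvY), rep_congr (h1 v hvY)]
      exact hf v hvY
    · have hv' := Finset.mem_sdiff.2 ⟨hv, hvY⟩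
      rw [good_congr (h2 v hv'), rep_congr (h2 v hv')]
      exact hf' v hv'
  · have h3 : bad g X = bad f Y ∪ bad f' (X \ Y) := by
      rw [← bad_congr h1, ← bad_congr h2, bad, bad, bad, ← Finset.filter_union,
        Finset.union_sdiff_of_subset hYX]
    have h4 := Finset.card_union_le (bad f Y) (bad f' (X \ Y))
    have h5 := Finset.card_sdiff_add_card_eq_card hYX
    rw [h3]
    omega

theorem exists_coloring_of_noContractibleTriangle (hG : G.Cubic) (ht : G.NoContractibleTriangle)
    {X : Finset G.V} (hX : bd X = ∅) :
    ∃ g : G.E → Fin 15, (∀ v ∈ X, Good g v ∨ Rep g v) ∧ 5 * (bad g X).card ≤ X.card := by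
  induction X using Finset.strongInduction with
  | H X ih =>
  by_cases hsplit : ∃ Y ⊆ X, Y.Nonempty ∧ Y ≠ X ∧ bd Y = ∅
  · obtain ⟨Y, hYX, hY, hne, hb⟩ := hsplit
    obtain ⟨f, hf, hfb⟩ := ih Y (hYX.ssubset_of_ne hne) hb
    obtain ⟨f', hf', hfb'⟩ := ih (X \ Y) (Finset.sdiff_ssubset hYX hY) (by rw [bd_sdiff hX hYX, hb])
    exact exists_coloring_of_sdiff hG.1 hYX hf hf' hfb hfb' (by simp [hb])
  push Not at hsplit
  by_cases hbr : ∃ Y ⊆ X, ∃ e, bd Y = {e}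
  · obtain ⟨Y, hYX, e, hb⟩ := hbr
    have key : ∀ Z ⊆ X, bd Z = {e} → ∃ f : G.E → Fin 15, f e = 0 ∧
        (∀ v ∈ Z, Good f v ∨ Rep f v) ∧ 5 * (bad f Z).card ≤ Z.card := by
      intro Z hZ hb
      have hZX : Z ≠ X := by rintro rfl; simp [hX] at hb
      obtain ⟨f, h1, h2, h3⟩ := branchColorable hG ht hb
        (fun W hW hne => (hsplit W (hW.trans hZ) hne fun h => hZX (hZ.antisymm (h ▸ hW))).ne_empty)
        0 (by decide)
      refine ⟨f, h1, h2, ?_⟩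
      have : wt 0 = -3 := by decide
      split_ifs at h3 <;> omega
    obtain ⟨f, h1, h2, h3⟩ := key Y hYX hb
    obtain ⟨f', h1', h2', h3'⟩ := key (X \ Y) Finset.sdiff_subset (by rw [bd_sdiff hX hYX, hb])
    exact exists_coloring_of_sdiff hG.1 hYX h2 h2' h3 h3' (by simp [hb, h1, h1'])
  push Not at hbr
  have hcut : ∀ D ⊆ X, D.Nonempty → D ≠ X → 2 ≤ (bd D ∩ inner X).card := by
    intro D hD hne hDX
    have h1 : bd D ⊆ inner X := by
      intro e he
      obtain ⟨u, hu, w, hw, h⟩ := mem_bd.1 he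
      exact (star_subset hG.1 (hD hu) ((mem_star_iff h).2 (.inl rfl))).resolve_right (by simp [hX])
    rw [Finset.inter_eq_left.2 h1]
    have h2 := Finset.card_ne_zero.2 (hsplit D hD hne hDX)
    have h3 : (bd D).card ≠ 1 := fun h => by
      obtain ⟨e, he⟩ := Finset.card_eq_one.1 h
      exact hbr D hD e he
    omega
  refine exists_coloring_of_bd_eq_empty hG hcut ?_ hX
  intro x hx y hy z hz e₁ e₂ e₃ h
  have := (eq_of_isTriangle hG ht hcut hx hy hz h).2
  simp [hX] at this

theorem Cubic.exists_star_eq_of_ne (hG : G.Cubic) {v : G.V} {e e' : G.E} (h : e ∈ G.star v)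
    (h' : e' ∈ G.star v) (hne : e ≠ e') : ∃ a, a ≠ e ∧ a ≠ e' ∧ G.star v = {a, e, e'} := by
  have hs : {e, e'} ⊆ G.star v := by simp [Finset.insert_subset_iff, h, h']
  obtain ⟨a, ha⟩ := Finset.card_eq_one.1 (show (G.star v \ {e, e'}).card = 1 by
    rw [Finset.card_sdiff_of_subset hs, hG.card_star, Finset.card_pair hne])
  have hmem : a ∈ G.star v \ {e, e'} := by simp [ha]
  simp only [Finset.mem_sdiff, Finset.mem_insert, Finset.mem_singleton, not_or] at hmem
  refine ⟨a, hmem.2.1, hmem.2.2, ?_⟩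
  rw [← Finset.sdiff_union_of_subset hs, ha, Finset.singleton_union]

/-- The edges around a triangle without multiple edges. -/
theorem Cubic.exists_star_eq_of_isTriangle (hG : G.Cubic) {x y z : G.V} {e₁ e₂ e₃ : G.E}
    (h : G.IsTriangle e₁ e₂ e₃ x y z) (h3 : (inner {x, y, z}).card = 3) :
    inner {x, y, z} = {e₁, e₂, e₃} ∧ ∃ a b c, G.star x = {a, e₁, e₃} ∧ G.star y = {b, e₁, e₂} ∧
      G.star z = {c, e₂, e₃} ∧ bd {x, y, z} = {a, b, c} := by
  obtain ⟨n12, n13, n23⟩ := h.edges_ne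
  have hi : inner {x, y, z} = {e₁, e₂, e₃} :=
    (Finset.eq_of_subset_of_card_le (subset_inner_of_isTriangle h)
      (by rw [h3, Finset.card_eq_three.2 ⟨e₁, e₂, e₃, n12, n13, n23, rfl⟩])).symm
  obtain ⟨hxy, hyz, hxz, h₁, h₂, h₃⟩ := h
  obtain ⟨a, a1, a3, ha⟩ := hG.exists_star_eq_of_ne ((mem_star_iff h₁).2 (.inl rfl))
    ((mem_star_iff h₃).2 (.inl rfl)) n13
  obtain ⟨b, b1, b2, hb⟩ := hG.exists_star_eq_of_ne ((mem_star_iff h₁).2 (.inr rfl))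
    ((mem_star_iff h₂).2 (.inl rfl)) n12
  obtain ⟨c, c2, c3, hc⟩ := hG.exists_star_eq_of_ne ((mem_star_iff h₂).2 (.inr rfl))
    ((mem_star_iff h₃).2 (.inr rfl)) n23
  have a2 : a ≠ e₂ := by
    rintro rfl
    rcases (mem_star_iff h₂).1 (show a ∈ G.star x by simp [ha]) with h | h
    exacts [hxy h, hxz h]
  have b3 : b ≠ e₃ := by
    rintro rfl
    rcases (mem_star_iff h₃).1 (show b ∈ G.star y by simp [hb]) with h | h
    exacts [hxy h.symm, hyz h]
  have c1 : c ≠ e₁ := by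
    rintro rfl
    rcases (mem_star_iff h₁).1 (show c ∈ G.star z by simp [hc]) with h | h
    exacts [hxz h.symm, hyz h.symm]
  refine ⟨hi, a, b, c, ha, hb, hc, ?_⟩
  ext e
  simp only [Finset.mem_insert, Finset.mem_singleton]
  constructor
  · intro he
    have hni : e ∉ inner {x, y, z} := fun h => notMem_bd_of_mem_inner h he
    obtain ⟨u, hu, v, -, h⟩ := mem_bd.1 he
    have heu : e ∈ G.star u := (mem_star_iff h).2 (.inl rfl)
    simp only [hi, Finset.mem_insert, Finset.mem_singleton, not_or] at hni hu
    rcases hu with rfl | rfl | rfl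
    · simp only [ha, Finset.mem_insert, Finset.mem_singleton] at heu; tauto
    · simp only [hb, Finset.mem_insert, Finset.mem_singleton] at heu; tauto
    · simp only [hc, Finset.mem_insert, Finset.mem_singleton] at heu; tauto
  · rintro (rfl | rfl | rfl)
    · exact (star_subset (v := x) hG.1 (by simp) (by simp [ha])).resolve_left
        (by simp [hi, a1, a2, a3])
    · exact (star_subset (v := y) hG.1 (by simp) (by simp [hb])).resolve_left
        (by simp [hi, b1, b2, b3])
    · exact (star_subset (v := z) hG.1 (by simp) (by simp [hc])).resolve_left
        (by simp [hi, c1, c2, c3])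

theorem exists_insert_mem_sylvesterStars (p : Fin 15) : ∃ s t, {p, s, t} ∈ sylvesterStars := by
  revert p; decide

/-- Colouring a triangle with equal colours at two of its vertices. -/
theorem exists_triangle_recoloring {f₀ : G.E → Fin 15} {x y z : G.V} {e₁ e₂ e₃ a b c : G.E}
    (n12 : e₁ ≠ e₂) (n13 : e₁ ≠ e₃) (n23 : e₂ ≠ e₃) (hx : G.star x = {a, e₁, e₃})
    (hy : G.star y = {b, e₁, e₂}) (hz : G.star z = {c, e₂, e₃})
    (ha : a ∉ ({e₁, e₂, e₃} : Finset G.E)) (hb : b ∉ ({e₁, e₂, e₃} : Finset G.E))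
    (hab : f₀ a = f₀ b) :
    ∃ f : G.E → Fin 15, (∀ e ∉ ({e₁, e₂, e₃} : Finset G.E), f e = f₀ e) ∧ Good f x ∧ Good f y ∧
      Rep f z := by
  obtain ⟨s, t, hst⟩ := exists_insert_mem_sylvesterStars (f₀ a)
  refine ⟨fun e => if e = e₁ then s else if e = e₂ ∨ e = e₃ then t else f₀ e, ?_, ?_, ?_, ?_⟩
  · intro e he
    simp only [Finset.mem_insert, Finset.mem_singleton, not_or] at he
    simp [he]
  · simp only [Finset.mem_insert, Finset.mem_singleton, not_or] at ha
    exact good_of_star hx (by simpa [ha, n13.symm] using hst)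
  · simp only [Finset.mem_insert, Finset.mem_singleton, not_or] at hb
    exact good_of_star hy (by simpa [hb, n12.symm, ← hab] using hst)
  · exact ⟨e₂, by simp [hz], e₃, by simp [hz], n23, by simp [n12.symm, n13.symm]⟩

/-- Extending a colouring of the edges leaving a triangle to the triangle. -/
theorem Cubic.exists_coloring_of_isTriangle (hG : G.Cubic) {x y z : G.V} {e₁ e₂ e₃ : G.E}
    (h : G.IsTriangle e₁ e₂ e₃ x y z) (h3 : (inner {x, y, z}).card = 3) (f₀ : G.E → Fin 15)
    (hf₀ : (bd {x, y, z}).image f₀ ∈ sylvesterStars ∨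
      ∃ e ∈ bd {x, y, z}, ∃ e' ∈ bd {x, y, z}, e ≠ e' ∧ f₀ e = f₀ e') :
    ∃ f : G.E → Fin 15, (∀ e ∉ inner {x, y, z}, f e = f₀ e) ∧
      (∀ u ∈ ({x, y, z} : Finset G.V), Good f u ∨ Rep f u) ∧
      ((bd {x, y, z}).image f₀ ∈ sylvesterStars → ∀ u ∈ ({x, y, z} : Finset G.V), Good f u) ∧
      ∃ w, ∀ u ∈ ({x, y, z} : Finset G.V), ¬ Good f u → u = w := by
  obtain ⟨hi, a, b, c, hx, hy, hz, hb⟩ := hG.exists_star_eq_of_isTriangle h h3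
  obtain ⟨n12, n13, n23⟩ := h.edges_ne
  have hni : ∀ e ∈ bd {x, y, z}, e ∉ ({e₁, e₂, e₃} : Finset G.E) :=
    fun e he h => notMem_bd_of_mem_inner (hi ▸ h) he
  have na := hni a (by simp [hb])
  have nb := hni b (by simp [hb])
  have nc := hni c (by simp [hb])
  rw [hi]
  by_cases hgood : (bd {x, y, z}).image f₀ ∈ sylvesterStars
  · suffices h : ∃ f : G.E → Fin 15, (∀ e ∉ ({e₁, e₂, e₃} : Finset G.E), f e = f₀ e) ∧
        ∀ u ∈ ({x, y, z} : Finset G.V), Good f u by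
      obtain ⟨f, hf, hg⟩ := h
      exact ⟨f, hf, fun u hu => .inl (hg u hu), fun _ => hg, x, fun u hu h => absurd (hg u hu) h⟩
    rw [hb, Finset.image_insert, Finset.image_insert, Finset.image_singleton] at hgood
    refine ⟨fun e => if e = e₁ then f₀ c else if e = e₂ then f₀ a else if e = e₃ then f₀ b
      else f₀ e, ?_, ?_⟩
    · intro e he
      simp only [Finset.mem_insert, Finset.mem_singleton, not_or] at he
      simp [he]
    · simp only [Finset.mem_insert, Finset.mem_singleton, not_or] at na nb nc
      simp only [Finset.mem_insert, Finset.mem_singleton, forall_eq_or_imp, forall_eq]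
      refine ⟨good_of_star hx ?_, good_of_star hy ?_, good_of_star hz ?_⟩
      · rw [Finset.pair_comm] at hgood
        simpa [na, n13.symm, n23.symm] using hgood
      · rw [Finset.insert_comm, Finset.pair_comm] at hgood
        simpa [nb, n12.symm] using hgood
      · rw [Finset.pair_comm, Finset.insert_comm] at hgood
        simpa [nc, n12.symm, n13.symm, n23.symm] using hgood
  · suffices h : ∃ f : G.E → Fin 15, (∀ e ∉ ({e₁, e₂, e₃} : Finset G.E), f e = f₀ e) ∧
        ((Good f x ∧ Good f y ∧ Rep f z) ∨ (Good f x ∧ Good f z ∧ Rep f y) ∨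
          (Good f y ∧ Good f z ∧ Rep f x)) by
      obtain ⟨f, hf, hg⟩ := h
      refine ⟨f, hf, ?_, fun h => absurd h hgood, ?_⟩
      · simp only [Finset.mem_insert, Finset.mem_singleton, forall_eq_or_imp, forall_eq]
        tauto
      · simp only [Finset.mem_insert, Finset.mem_singleton, forall_eq_or_imp, forall_eq]
        rcases hg with h | h | h
        exacts [⟨z, by tauto⟩, ⟨y, by tauto⟩, ⟨x, by tauto⟩]
    have hrep : f₀ a = f₀ b ∨ f₀ a = f₀ c ∨ f₀ b = f₀ c := by
      obtain ⟨e, he, e', he', hne, hee⟩ := hf₀.resolve_left hgood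
      rw [hb, Finset.mem_insert, Finset.mem_insert, Finset.mem_singleton] at he he'
      grind
    rcases hrep with hab | hac | hbc
    · obtain ⟨f, hf, h⟩ := exists_triangle_recoloring n12 n13 n23 hx hy hz na nb hab
      exact ⟨f, hf, .inl h⟩
    · have hp : ({e₃, e₂, e₁} : Finset G.E) = {e₁, e₂, e₃} := by ext; simp; tauto
      obtain ⟨f, hf, h⟩ := exists_triangle_recoloring (x := x) (y := z) (z := y) n23.symm n13.symm
        n12.symm (by rw [hx, Finset.pair_comm]) (by rw [hz, Finset.pair_comm])
        (by rw [hy, Finset.pair_comm]) (hp ▸ na) (hp ▸ nc) hac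
      exact ⟨f, hp ▸ hf, .inr (.inl h)⟩
    · have hp : ({e₂, e₃, e₁} : Finset G.E) = {e₁, e₂, e₃} := by ext; simp; tauto
      obtain ⟨f, hf, h⟩ := exists_triangle_recoloring (x := y) (y := z) (z := x) n23 n12.symm
        n13.symm (by rw [hy, Finset.pair_comm]) hz
        (by rw [hx, Finset.pair_comm]) (hp ▸ nb) (hp ▸ nc) hbc
      exact ⟨f, hp ▸ hf, .inr (.inr h)⟩

/-- Contracting `y` and `z` onto `x`. -/
noncomputable def contract (G : Multigraph) (x y z : G.V) (hxy : x ≠ y) (hxz : x ≠ z) :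
    Multigraph where
  V := {v : G.V // v ≠ y ∧ v ≠ z}
  E := {e : G.E // e ∉ inner {x, y, z}}
  ends e := (G.ends e).map fun v => if h : v ≠ y ∧ v ≠ z then ⟨v, h⟩ else ⟨x, hxy, hxz⟩

section Contract

variable {x y z : G.V} (hxy : x ≠ y) (hxz : x ≠ z)

/-- The projection onto the contracted graph. -/
noncomputable def proj (v : G.V) : (G.contract x y z hxy hxz).V :=
  if h : v ≠ y ∧ v ≠ z then ⟨v, h⟩ else ⟨x, hxy, hxz⟩

theorem proj_surjective : Function.Surjective (proj hxy hxz) := fun v => ⟨v.1, dif_pos v.2⟩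

theorem proj_eq_proj {u v : G.V} : proj hxy hxz u = proj hxy hxz v ↔
    u = v ∨ (u ∈ ({x, y, z} : Finset G.V) ∧ v ∈ ({x, y, z} : Finset G.V)) := by
  have key : ∀ v, (proj hxy hxz v).1 = if v ≠ y ∧ v ≠ z then v else x := by
    intro v
    by_cases h : v ≠ y ∧ v ≠ z
    · exact (congrArg Subtype.val (dif_pos h)).trans (if_pos h).symm
    · exact (congrArg Subtype.val (dif_neg h)).trans (if_neg h).symm
  have h1 : proj hxy hxz u = proj hxy hxz v ↔ (proj hxy hxz u).1 = (proj hxy hxz v).1 :=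
    ⟨fun h => by rw [h], fun h => Subtype.ext h⟩
  rw [h1, key, key]
  simp only [Finset.mem_insert, Finset.mem_singleton]
  grind

/-- The inclusion of the edges of the contracted graph. -/
def edgeVal (e : (G.contract x y z hxy hxz).E) : G.E := e.1

theorem edgeVal_injective : Function.Injective (edgeVal hxy hxz) := fun _ _ h => Subtype.ext h

theorem edgeVal_notMem (e : (G.contract x y z hxy hxz).E) : edgeVal hxy hxz e ∉ inner {x, y, z} :=
  e.2

theorem exists_edgeVal_eq {e : G.E} (he : e ∉ inner {x, y, z}) : ∃ e', edgeVal hxy hxz e' = e :=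
  ⟨⟨e, he⟩, rfl⟩

theorem contract_ends {e : (G.contract x y z hxy hxz).E} {u v : G.V}
    (h : G.ends (edgeVal hxy hxz e) = s(u, v)) :
    (G.contract x y z hxy hxz).ends e = s(proj hxy hxz u, proj hxy hxz v) := by
  change (G.ends (edgeVal hxy hxz e)).map (proj hxy hxz) = _
  rw [h, Sym2.map_mk]

theorem contract_loopless (hl : G.Loopless) : (G.contract x y z hxy hxz).Loopless := by
  intro e
  obtain ⟨u, v, huv, h⟩ := exists_ends hl (edgeVal hxy hxz e)
  have := edgeVal_notMem hxy hxz e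
  rw [mem_inner_iff h] at this
  rw [contract_ends hxy hxz h, Sym2.mk_isDiag_iff, proj_eq_proj]
  tauto

theorem image_star_contract (hl : G.Loopless) (w : G.V) :
    ((G.contract x y z hxy hxz).star (proj hxy hxz w)).image (edgeVal hxy hxz) =
      if w ∈ ({x, y, z} : Finset G.V) then bd {x, y, z} else G.star w := by
  ext e
  obtain ⟨u, v, huv, h⟩ := exists_ends hl e
  have h1 : e ∈ ((G.contract x y z hxy hxz).star (proj hxy hxz w)).image (edgeVal hxy hxz) ↔
      e ∉ inner {x, y, z} ∧ (proj hxy hxz w = proj hxy hxz u ∨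
        proj hxy hxz w = proj hxy hxz v) := by
    rw [Finset.mem_image]
    constructor
    · rintro ⟨e, he, rfl⟩
      exact ⟨edgeVal_notMem hxy hxz e, (mem_star_iff (contract_ends hxy hxz h)).1 he⟩
    · rintro ⟨he, hw⟩
      obtain ⟨e, rfl⟩ := exists_edgeVal_eq hxy hxz he
      exact ⟨e, (mem_star_iff (contract_ends hxy hxz h)).2 hw, rfl⟩
  rw [h1, mem_inner_iff h, proj_eq_proj, proj_eq_proj]
  split_ifs with hw
  · rw [mem_bd_iff h]; grind
  · rw [mem_star_iff h]; grind

theorem contract_cubic (hG : G.Cubic) (h3 : (bd {x, y, z}).card = 3) :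
    (G.contract x y z hxy hxz).Cubic := by
  refine cubic_of_card_star (contract_loopless hxy hxz hG.1) fun v => ?_
  obtain ⟨v, rfl⟩ := proj_surjective hxy hxz v
  rw [← Finset.card_image_of_injective _ (edgeVal_injective hxy hxz),
    image_star_contract hxy hxz hG.1]
  split_ifs
  exacts [h3, hG.card_star _]

theorem good_contract_iff (hl : G.Loopless) (f : G.E → Fin 15) (w : G.V) :
    Good (f ∘ edgeVal hxy hxz) (proj hxy hxz w) ↔
      (if w ∈ ({x, y, z} : Finset G.V) then bd {x, y, z} else G.star w).image f
        ∈ sylvesterStars := by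
  rw [← image_star_contract hxy hxz hl, Finset.image_image, Good]

theorem exists_of_rep_contract (hl : G.Loopless) {f : G.E → Fin 15} {w : G.V}
    (h : Rep (f ∘ edgeVal hxy hxz) (proj hxy hxz w)) :
    ∃ e ∈ if w ∈ ({x, y, z} : Finset G.V) then bd {x, y, z} else G.star w,
      ∃ e' ∈ if w ∈ ({x, y, z} : Finset G.V) then bd {x, y, z} else G.star w,
      e ≠ e' ∧ f e = f e' := by
  rw [← image_star_contract hxy hxz hl]
  obtain ⟨e, he, e', he', hne, hee⟩ := h
  exact ⟨_, Finset.mem_image_of_mem _ he, _, Finset.mem_image_of_mem _ he',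
    (edgeVal_injective hxy hxz).ne hne, hee⟩

/-- Lifting a colouring of the contracted graph. -/
theorem exists_coloring_of_contract (hG : G.Cubic) {e₁ e₂ e₃ : G.E}
    (h : G.IsTriangle e₁ e₂ e₃ x y z) (h3 : (inner {x, y, z}).card = 3)
    {f' : (G.contract x y z hxy hxz).E → Fin 15} (hf' : ∀ v, Good f' v ∨ Rep f' v) :
    ∃ f : G.E → Fin 15, (∀ v, Good f v ∨ Rep f v) ∧
      (bad f Finset.univ).card ≤ (bad f' Finset.univ).card := by
  obtain ⟨f₀, rfl⟩ : ∃ f₀ : G.E → Fin 15, f₀ ∘ edgeVal hxy hxz = f' :=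
    ⟨_, Function.extend_comp (edgeVal_injective hxy hxz) f' 0⟩
  have hxK : x ∈ ({x, y, z} : Finset G.V) := by simp
  obtain ⟨f, hff₀, h1, h2, w, h4⟩ := hG.exists_coloring_of_isTriangle h h3 f₀ (by
    have h1 := hf' (proj hxy hxz x)
    rw [good_contract_iff hxy hxz hG.1, if_pos hxK] at h1
    refine h1.imp_right fun h => ?_
    simpa only [if_pos hxK] using exists_of_rep_contract hxy hxz hG.1 h)
  have hf : f₀ ∘ edgeVal hxy hxz = f ∘ edgeVal hxy hxz :=
    funext fun e => (hff₀ _ (edgeVal_notMem hxy hxz e)).symm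
  refine ⟨f, fun v => ?_, ?_⟩
  · by_cases hv : v ∈ ({x, y, z} : Finset G.V)
    · exact h1 v hv
    · refine (hf' (proj hxy hxz v)).imp (fun h => ?_) fun h => ?_
      · rwa [hf, good_contract_iff hxy hxz hG.1, if_neg hv] at h
      · rw [hf] at h
        simpa only [if_neg hv, Rep] using exists_of_rep_contract hxy hxz hG.1 h
  · refine Finset.card_le_card_of_injOn (proj hxy hxz) ?_ ?_
    · intro v hv
      simp only [bad, Finset.coe_filter, Finset.mem_univ, true_and, Set.mem_ofPred_eq] at hv ⊢
      intro hg
      by_cases hvK : v ∈ ({x, y, z} : Finset G.V)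
      · rw [good_contract_iff hxy hxz hG.1, if_pos hvK] at hg
        exact hv (h2 hg v hvK)
      · rw [hf, good_contract_iff hxy hxz hG.1, if_neg hvK] at hg
        exact hv hg
    · intro u hu v hv huv
      simp only [bad, Finset.coe_filter, Finset.mem_univ, true_and, Set.mem_ofPred_eq] at hu hv
      rcases (proj_eq_proj hxy hxz).1 huv with h | ⟨h5, h6⟩
      · exact h
      · rw [h4 u h5 hu, h4 v h6 hv]

end Contract

theorem Cubic.exists_coloring (hG : G.Cubic) : ∃ f : G.E → Fin 15,
    (∀ v, Good f v ∨ Rep f v) ∧ 5 * (bad f Finset.univ).card ≤ Fintype.card G.V := by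
  induction hn : Fintype.card G.V using Nat.strong_induction_on generalizing G with
  | _ n ih =>
  by_cases ht : G.NoContractibleTriangle
  · have hb : bd (Finset.univ : Finset G.V) = ∅ := by ext e; simp [mem_bd]
    obtain ⟨f, hf, hfb⟩ := exists_coloring_of_noContractibleTriangle hG ht hb
    exact ⟨f, fun v => hf v (Finset.mem_univ v), hn ▸ hfb⟩
  · rw [NoContractibleTriangle] at ht
    push Not at ht
    obtain ⟨x, y, z, e₁, e₂, e₃, h, h3⟩ := ht
    have hxy := h.1
    have hxz := h.2.2.1
    have hK := hG.three_mul_card {x, y, z}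
    rw [Finset.card_eq_three.2 ⟨x, y, z, hxy, hxz, h.2.1, rfl⟩] at hK
    have hlt : Fintype.card (G.contract x y z hxy hxz).V < n :=
      hn ▸ Fintype.card_subtype_lt (x := y) (by simp)
    obtain ⟨f', hf', hb'⟩ := ih _ hlt (contract_cubic hxy hxz hG (by omega)) rfl
    obtain ⟨f, hf, hb⟩ := exists_coloring_of_contract hxy hxz hG h h3 hf'
    exact ⟨f, hf, by omega⟩

theorem sylvesterStars_subset_range : ∀ s ∈ sylvesterStars, ∃ y, s = SylvesterS.star y := by
  have key : ∀ (s : Finset (Fin 15)) (y : Fin 10),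
      (∀ e : Fin 15, e ∈ s ↔ y ∈ (![s(0,1), s(1,2), s(1,3), s(2,3), s(2,3),
            s(0,4), s(4,5), s(4,6), s(5,6), s(5,6),
            s(0,7), s(7,8), s(7,9), s(8,9), s(8,9)] : Fin 15 → Sym2 (Fin 10)) e) →
      s = SylvesterS.star y :=
    fun s y h => Finset.ext fun e => (h e).trans (mem_star (G := SylvesterS)).symm
  intro s hs
  simp only [sylvesterStars, Finset.mem_insert, Finset.mem_singleton] at hs
  rcases hs with rfl | rfl | rfl | rfl | rfl | rfl | rfl | rfl | rfl | rfl
  exacts [⟨_, key _ 0 (by decide)⟩, ⟨_, key _ 1 (by decide)⟩, ⟨_, key _ 2 (by decide)⟩,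
    ⟨_, key _ 3 (by decide)⟩, ⟨_, key _ 4 (by decide)⟩, ⟨_, key _ 5 (by decide)⟩,
    ⟨_, key _ 6 (by decide)⟩, ⟨_, key _ 7 (by decide)⟩, ⟨_, key _ 8 (by decide)⟩,
    ⟨_, key _ 9 (by decide)⟩]

end Multigraph

/-- every cubic graph G has a map f : E(G) → E(S) with
|V(f)| ≥ (4/5)|V(G)|, and every vertex outside V(f) has two distinct incident
edges of the same color. -/
theorem four_fifths_sylvester_coloring (G : Multigraph) (hG : G.Cubic) :
    ∃ f : G.E → SylvesterS.E,
      4 * Fintype.card G.V ≤ 5 * (Multigraph.colVerts G SylvesterS f).ncard ∧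
      ∀ v : G.V, v ∉ Multigraph.colVerts G SylvesterS f →
        ∃ e ∈ G.star v, ∃ e' ∈ G.star v, e ≠ e' ∧ f e = f e' := by
  obtain ⟨f, hf, hb⟩ := hG.exists_coloring
  have hcol : ∀ v, Multigraph.Good f v → v ∈ Multigraph.colVerts G SylvesterS f := by
    intro v hv
    obtain ⟨y, hy⟩ := Multigraph.sylvesterStars_subset_range _ hv
    exact ⟨y, hy⟩
  refine ⟨f, ?_, fun v hv => (hf v).resolve_left fun h => hv (hcol v h)⟩
  have h1 : ((Finset.univ.filter (Multigraph.Good f) : Finset G.V) : Set G.V) ⊆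
      Multigraph.colVerts G SylvesterS f := fun v hv => hcol v (by simpa using hv)
  have h2 := Set.ncard_le_ncard h1
  rw [Set.ncard_coe_finset] at h2
  have h3 := Finset.card_filter_add_card_filter_not (s := (Finset.univ : Finset G.V)) (Multigraph.Good f)
  rw [Finset.card_univ] at h3
  rw [Multigraph.bad] at hb
  omega
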